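/- arXiv:2105.00541 — 3 statements merged into one kernel-verified Lean document; each statement's English description precedes it below -/
import Mathlib

section
/- Let W = (𝒫,[n]) be an admissible Wilson loop diagram with k propagators. Then each Grassmann necklace minor Δ_{I_a}(x) ∈ ℝ[x] of M_{V(𝒫)} is, up to sign, a product of polynomials each of which is either a single variable x_{p,v} or a 2×2 determinant x_{p,e}x_{q,e+1} − x_{p,e+1}x_{q,e}, where p and q are distinct propagators of 𝒫 both incident to the edge e; in particular every irreducible factor of Δ_{I_a}(x) is linear (a single variable) or quadratic (such a 2×2 determinant), and Δ_{I_a}(x) has an irreducible quadratic factor only if two propagators of 𝒫 are incident to a common edge. -/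
/-- `b` lies strictly inside the cyclic interval going (in the increasing cyclic direction)
from `a` to `c` in `ZMod n`. -/
def Inside {n : ℕ} (a b c : ZMod n) : Prop :=
  0 < (b - a).val ∧ (b - a).val < (c - a).val

/-- Two propagators (given as ordered pairs representing unordered pairs) cross:
exactly one endpoint of `q` lies strictly inside each of the two cyclic intervals into
which the endpoints of `p` divide `ZMod n`. -/
def Cross {n : ℕ} (p q : ZMod n × ZMod n) : Prop :=
  (Inside p.1 q.1 p.2 ∧ Inside p.2 q.2 p.1) ∨
    (Inside p.1 q.2 p.2 ∧ Inside p.2 q.1 p.1)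

/-- The support `V_p = {i, i+1, j, j+1}` of a propagator `p = (i,j)`. -/
def propSupp {n : ℕ} (p : ZMod n × ZMod n) : Finset (ZMod n) :=
  {p.1, p.1 + 1, p.2, p.2 + 1}

/-- The support `V_P` of a multiset of propagators. -/
def multiSupp {n : ℕ} (P : Multiset (ZMod n × ZMod n)) : Finset (ZMod n) :=
  (P.map propSupp).sup

/-- A Wilson loop diagram `(Ps, [n])` is admissible: no two propagators cross,
every nonempty subset `P` of the propagators satisfies `|V_P| ≥ |P| + 3`
(local density), and `n ≥ |Ps| + 4` (global density). -/
def Admissible (n : ℕ) (Ps : Multiset (ZMod n × ZMod n)) : Prop :=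
  (∀ p ∈ Ps, ∀ q ∈ Ps, ¬ Cross p q) ∧
  (∀ P : Multiset (ZMod n × ZMod n), P ≤ Ps → P ≠ 0 →
    Multiset.card P + 3 ≤ (multiSupp P).card) ∧
  Multiset.card Ps + 4 ≤ n


open MvPolynomial

/-- The polynomial ring `ℝ[x_{p,v}]` with variables indexed by propagator rows and
vertices of the diagram. -/
abbrev WR (k n : ℕ) : Type := MvPolynomial (Fin k × ZMod n) ℝ

/-- Its field of fractions `K`. -/
abbrev WF (k n : ℕ) : Type := FractionRing (WR k n)

/-- The matrix `M_{V(𝒫)}` of a Wilson loop diagram, with entries in `ℝ[x]`: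
the `(p,v)` entry is `x_{p,v}` if `v ∈ V_p` and `0` otherwise. -/
noncomputable def MWpoly (k n : ℕ) (P : Fin k → ZMod n × ZMod n) :
    Matrix (Fin k) (ZMod n) (WR k n) :=
  Matrix.of fun i v => if v ∈ propSupp (P i) then X (i, v) else 0

/-- The matrix `M_{V(𝒫)}` of a Wilson loop diagram, over the field `K`. -/
noncomputable def MW (k n : ℕ) (P : Fin k → ZMod n × ZMod n) :
    Matrix (Fin k) (ZMod n) (WF k n) :=
  Matrix.of fun i v => algebraMap (WR k n) (WF k n) (MWpoly k n P i v)

/-- The minor `Δ_S(x) ∈ ℝ[x]` of `M_{V(𝒫)}` on a `k`-element set `S` of columns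
(and `0` if `S` does not have `k` elements).  It is well defined up to the sign
coming from the chosen enumeration of `S`. -/
noncomputable def minorW (k n : ℕ) (P : Fin k → ZMod n × ZMod n)
    (S : Finset (ZMod n)) : WR k n :=
  if h : S.card = k then
    ((MWpoly k n P).submatrix id
      (fun i : Fin k => ((S.equivFin.symm (Fin.cast h.symm i)) : ZMod n))).det
  else 0

/-- The position of `x` in the cyclic order `<ₐ` starting at `a`. -/
def keyW {n : ℕ} (a x : ZMod n) : ℕ := (x - a).val

/-- The Gale order `≤ₐ` associated to the cyclic shift `<ₐ`:  `S ≤ₐ T` iff the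
sorted lists of positions agree in length and are pointwise `≤`. -/
def GaleLEat {n : ℕ} (a : ZMod n) (S T : Finset (ZMod n)) : Prop :=
  List.Forall₂ (· ≤ ·)
    ((S.image (keyW a)).sort (· ≤ ·)) ((T.image (keyW a)).sort (· ≤ ·))

/-- `S` is a basis of columns of `M_{V(𝒫)}`: it has `k` elements and its maximal
minor is nonzero. -/
def IsBasisW (k n : ℕ) (P : Fin k → ZMod n × ZMod n) (S : Finset (ZMod n)) : Prop :=
  S.card = k ∧ minorW k n P S ≠ 0

/-- `S` is the Grassmann necklace element `I_a`: the `≤ₐ`-least basis. -/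
def NecklaceAt (k n : ℕ) (P : Fin k → ZMod n × ZMod n) (a : ZMod n)
    (S : Finset (ZMod n)) : Prop :=
  IsBasisW k n P S ∧ ∀ T : Finset (ZMod n), IsBasisW k n P T → GaleLEat a S T

/-!
Expanding a nonzero maximal minor shows that the bases are the column sets of the matchings of the
support pattern, and by the Gale order `I_a` carries a matching `f` of least total position. Draw an
arc from row `i` to row `j` if `i` could take over the column of `j`. The strongly connected
components of this digraph are the diagonal blocks of a block triangular form of the minor, so it
suffices to show that the block of a source component `R` is a single entry or a `2 × 2` determinant
of the stated shape.

Hall's theorem lets a chain of reassignments along a path of the digraph free the column of any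
`j ∈ R`. Minimality of `f` therefore forces every column up to that of `j` which occurs in a row
reachable from `j` to be matched, by `f` to such a row. Cut the circle open at `a`, so that
propagators become noncrossing chords, and take for `j` the row matched to the greatest column `t`
of `R`. A chord whose left end is the edge `{t - 1, t}` meets the columns of `R` only in `t - 1` and
`t`. If there is at most one such chord, consider the outermost chord `p` whose right end is an edge
at `t`: by saturation and noncrossing, the chords below `p` have almost no vertices outside their
own matched columns, while local density requires at least three of them. This forces `p` to meet
the columns of `R` only in `t - 1` and `t` as well. So two chords of `R` share the edge
`{t - 1, t}` and have no other columns of `R`, whence `R` consists of these two.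
-/

section Matchings

variable {ι α : Type*} {V : ι → Finset α} {f g : ι → α} {R Z : Set ι} {i j p q r : ι} {v : α}

/-- A system of distinct representatives of the family `V`: row `i` of a matrix whose support is
`V` is matched to column `f i`. -/
structure IsMatching (V : ι → Finset α) (f : ι → α) : Prop where
  injective : Function.Injective f
  mem : ∀ i, f i ∈ V i

/-- Reachability in the exchange digraph of `f`, which has an arc from `i` to `j` whenever row `i`
could take over the column `f j`. -/
def Reaches (V : ι → Finset α) (f : ι → α) : ι → ι → Prop :=
  Relation.ReflTransGen fun i j => f j ∈ V i

/-- Closure under predecessors in the exchange digraph: the columns `f '' R` vanish outside the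
rows `R`, so that `R` is a diagonal block of a block triangular matrix. -/
def IsPredClosed (V : ι → Finset α) (f : ι → α) (R : Set ι) : Prop :=
  ∀ ⦃i j⦄, f j ∈ V i → j ∈ R → i ∈ R

/-- A source among the strongly connected components of the exchange digraph, encoded as a minimal
nonempty set closed under predecessors. -/
def IsSourceComponent (V : ι → Finset α) (f : ι → α) (R : Set ι) : Prop :=
  Minimal (fun s => s.Nonempty ∧ IsPredClosed V f s) R

/-- Every column `≤ t` that occurs in a row of `Z` is matched by `f` to a row of `Z`. -/
def IsSaturated [LE α] (V : ι → Finset α) (f : ι → α) (Z : Set ι) (t : α) : Prop :=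
  ∀ r ∈ Z, ∀ v ∈ V r, v ≤ t → v ∈ f '' Z

/-- A matching of least total weight, where the weight of a column is the column itself. -/
structure IsMinMatching [Fintype ι] [AddCommMonoid α] [LE α] (V : ι → Finset α) (f : ι → α) : Prop
    extends IsMatching V f where
  sum_le : ∀ g, IsMatching V g → ∑ i, f i ≤ ∑ i, g i

theorem IsPredClosed.mem_of_mem (hR : IsPredClosed V f R) (hv : v ∈ f '' R) (hi : v ∈ V i) :
    i ∈ R := by
  obtain ⟨j, hj, rfl⟩ := hv
  exact hR hi hj

theorem IsMatching.image {β : Type*} [DecidableEq β] {φ : α → β} (hφ : Function.Injective φ)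
    (hf : IsMatching V f) : IsMatching (fun i => (V i).image φ) (φ ∘ f) :=
  ⟨hφ.comp hf.injective, fun i => Finset.mem_image_of_mem φ (hf.mem i)⟩

theorem IsMatching.exists_eq_comp {β : Type*} [DecidableEq β] {φ : α → β} {g : ι → β}
    (hg : IsMatching (fun i => (V i).image φ) g) : ∃ h, IsMatching V h ∧ g = φ ∘ h := by
  choose h hV hh using fun i => Finset.mem_image.1 (hg.mem i)
  obtain rfl : φ ∘ h = g := funext hh
  exact ⟨h, ⟨hg.injective.of_comp, hV⟩, rfl⟩

theorem exists_isSourceComponent [Finite ι] [Nonempty ι] (V : ι → Finset α) (f : ι → α) :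
    ∃ R, IsSourceComponent V f R :=
  (Set.toFinite _).exists_minimal ⟨Set.univ, Set.univ_nonempty, fun _ _ _ _ => Set.mem_univ _⟩

namespace IsSourceComponent

theorem nonempty (hR : IsSourceComponent V f R) : R.Nonempty := hR.prop.1

theorem isPredClosed (hR : IsSourceComponent V f R) : IsPredClosed V f R := hR.prop.2

theorem reaches (hR : IsSourceComponent V f R) (hi : i ∈ R) (hj : j ∈ R) : Reaches V f i j := by
  have hne : {l | l ∈ R ∧ Reaches V f l j}.Nonempty := ⟨j, hj, .refl⟩
  have hclosed : IsPredClosed V f {l | l ∈ R ∧ Reaches V f l j} := fun _ _ harc hl =>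
    ⟨hR.isPredClosed harc hl.1, .head harc hl.2⟩
  exact (hR.le_of_le ⟨hne, hclosed⟩ (fun _ hl => hl.1) hi).2

theorem eq_of_subset {B : Set ι} (hR : IsSourceComponent V f R) (hBR : B ⊆ R) (hB : B.Nonempty)
    (hclosed : ∀ r ∈ B, ∀ j ∈ R, f j ∈ V r → j ∈ B) : B = R := by
  refine hBR.antisymm (Set.sdiff_eq_empty.1 (Set.not_nonempty_iff_eq_empty.1 fun hne => ?_))
  have hdiff : IsPredClosed V f (R \ B) := fun i j harc hj =>
    ⟨hR.isPredClosed harc hj.1, fun hi => hj.2 (hclosed i hi j hj.1 harc)⟩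
  obtain ⟨b, hb⟩ := hB
  exact (hR.le_of_le ⟨hne, hdiff⟩ Set.sdiff_subset (hBR hb)).2 hb

theorem exists_mem_ne (hR : IsSourceComponent V f R) (hf : IsMatching V f) (hR2 : R.Nontrivial)
    (hp : p ∈ R) (u : α) : ∃ v ∈ V p, v ∈ f '' R ∧ v ≠ u := by
  by_contra! h
  have hsingle : {p} = R := by
    refine hR.eq_of_subset (by simpa using hp) (by simp) ?_
    rintro _ rfl j hj hjp
    exact hf.injective ((h _ hjp ⟨j, hj, rfl⟩).trans (h _ (hf.mem _) ⟨_, hp, rfl⟩).symm)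
  exact hR2.not_subsingleton (hsingle ▸ Set.subsingleton_singleton)

theorem exists_ne_mem (hR : IsSourceComponent V f R) (hR2 : R.Nontrivial) (hj : j ∈ R) :
    ∃ i ∈ R, i ≠ j ∧ f j ∈ V i := by
  by_contra! h
  obtain ⟨l, hl, hlj⟩ := hR2.exists_ne j
  have hdiff : R \ {j} = R := by
    refine hR.eq_of_subset Set.sdiff_subset ⟨l, hl, hlj⟩ fun r hr i hi hir => ⟨hi, ?_⟩
    rintro rfl
    exact h r hr.1 hr.2 hir
  exact (hdiff.symm ▸ hj : j ∈ R \ {j}).2 rfl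

theorem eq_pair (hR : IsSourceComponent V f R) (hf : IsMatching V f) (hp : p ∈ R) (hq : q ∈ R)
    (hpq : p ≠ q) {u v : α} (hVp : ∀ w ∈ V p, w ∈ f '' R → w = u ∨ w = v)
    (hVq : ∀ w ∈ V q, w ∈ f '' R → w = u ∨ w = v) :
    R = {p, q} ∧ (f p = u ∧ f q = v ∨ f p = v ∧ f q = u) := by
  have hfpq : f p ≠ f q := hf.injective.ne hpq
  have hcols : f p = u ∧ f q = v ∨ f p = v ∧ f q = u := by
    rcases hVp _ (hf.mem p) ⟨p, hp, rfl⟩ with h | h <;>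
      rcases hVq _ (hf.mem q) ⟨q, hq, rfl⟩ with h' | h' <;> simp_all
  refine ⟨.symm (hR.eq_of_subset (Set.pair_subset hp hq) ⟨p, .inl rfl⟩ ?_), hcols⟩
  intro r hr j hj hjr
  have hfj : f j = u ∨ f j = v := by
    rcases hr with rfl | rfl
    exacts [hVp _ hjr ⟨j, hj, rfl⟩, hVq _ hjr ⟨j, hj, rfl⟩]
  have hjpq : f j = f p ∨ f j = f q := by
    rcases hcols with ⟨rfl, rfl⟩ | ⟨rfl, rfl⟩
    exacts [hfj, hfj.symm]
  exact hjpq.imp (hf.injective ·) (hf.injective ·)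

end IsSourceComponent

theorem Reaches.mem_of_forall_mem {B : Set ι} (h : Reaches V f i j) (hi : i ∈ B)
    (hB : ∀ r ∈ B, ∀ l, f l ∈ V r → l ∈ B) : j ∈ B := by
  induction h with
  | refl => exact hi
  | tail _ harc ih => exact hB _ ih _ harc

theorem IsMatching.image_eq_of_range_subset [Finite ι] (hf : IsMatching V f) (hg : IsMatching V g)
    (hgf : Set.range g ⊆ Set.range f) (hZ : ∀ r ∈ Z, ∀ l, f l ∈ V r → l ∈ Z) : g '' Z = f '' Z := by
  refine Set.eq_of_subset_of_ncard_le ?_ ?_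
  · rintro _ ⟨r, hr, rfl⟩
    obtain ⟨l, hl⟩ := hgf ⟨r, rfl⟩
    exact ⟨l, hZ r hr l (hl ▸ hg.mem r), hl⟩
  · rw [Set.ncard_image_of_injective _ hf.injective, Set.ncard_image_of_injective _ hg.injective]

section Rerouting

variable [Fintype ι] [DecidableEq ι] [DecidableEq α]

theorem IsMatching.card_le_card_biUnion_inter (hf : IsMatching V f) (hjp : Reaches V f j p)
    {B : Finset ι} (hp : p ∉ B) :
    B.card ≤ (B.biUnion V ∩ (Finset.univ.erase j).image f).card := by
  -- If the column of `j` is lost, an arc leaving `B` on the way from `j` to `p` makes up for it.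
  suffices ∃ B' : Finset ι, B'.card = B.card ∧ j ∉ B' ∧ ∀ i ∈ B', f i ∈ B.biUnion V by
    obtain ⟨B', hcard, hj, hB'⟩ := this
    rw [← hcard, ← Finset.card_image_of_injective B' hf.injective]
    refine Finset.card_le_card (Finset.subset_inter (Finset.image_subset_iff.2 hB')
      (Finset.image_subset_image fun i hi => ?_))
    exact Finset.mem_erase.2 ⟨fun hij => hj (hij ▸ hi), Finset.mem_univ i⟩
  have hself : ∀ i ∈ B, f i ∈ B.biUnion V := fun i hi =>
    Finset.mem_biUnion.2 ⟨i, hi, hf.mem i⟩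
  by_cases hj : j ∈ B
  · obtain ⟨r, hr, l, hl, hrl⟩ : ∃ r ∈ B, ∃ l ∉ B, f l ∈ V r := by
      by_contra! h
      exact hp (hjp.mem_of_forall_mem (B := B) hj fun r hr l harc =>
        not_imp_not.1 (h r hr l) harc)
    refine ⟨insert l (B.erase j), ?_, ?_, ?_⟩
    · rw [Finset.card_insert_of_notMem (fun h => hl (Finset.mem_of_mem_erase h)),
        Finset.card_erase_add_one hj]
    · simp only [Finset.mem_insert, Finset.mem_erase, ne_eq, not_true_eq_false, false_and, or_false]
      rintro rfl
      exact hl hj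
    · intro i hi
      rcases Finset.mem_insert.1 hi with rfl | hi
      · exact Finset.mem_biUnion.2 ⟨r, hr, hrl⟩
      · exact hself i (Finset.mem_of_mem_erase hi)
  · exact ⟨B, rfl, hj, hself⟩

theorem IsMatching.exists_reroute (hf : IsMatching V f) (hjp : Reaches V f j p) (hv : v ∈ V p)
    (hvf : v ∉ (Finset.univ.erase j).image f) :
    ∃ g, IsMatching V g ∧ g p = v ∧ ∀ i ≠ p, g i ∈ (Finset.univ.erase j).image f := by
  set T := (Finset.univ.erase j).image f
  let W : ι → Finset α := fun i => if i = p then {v} else V i ∩ T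
  have hWp : W p = {v} := if_pos rfl
  have hW : ∀ i ≠ p, W i = V i ∩ T := fun i hi => if_neg hi
  have hWB : ∀ B : Finset ι, p ∉ B → B.biUnion W = B.biUnion V ∩ T := fun B hB => by
    rw [Finset.biUnion_inter]
    exact Finset.biUnion_congr rfl fun i hi => hW i fun hip => hB (hip ▸ hi)
  have hall : ∀ B : Finset ι, B.card ≤ (B.biUnion W).card := fun B => by
    by_cases hB : p ∈ B
    · have hpB : p ∉ B.erase p := Finset.notMem_erase p B
      have hcard := hf.card_le_card_biUnion_inter hjp hpB
      rw [← Finset.insert_erase hB, Finset.biUnion_insert, Finset.card_insert_of_notMem hpB, hWp,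
        hWB _ hpB, Finset.singleton_union,
        Finset.card_insert_of_notMem fun h => hvf (Finset.mem_of_mem_inter_right h)]
      exact Nat.succ_le_succ hcard
    · rw [hWB B hB]
      exact hf.card_le_card_biUnion_inter hjp hB
  obtain ⟨g, hg, hgW⟩ := (Finset.all_card_le_biUnion_card_iff_exists_injective W).1 hall
  have hgp : g p = v := by simpa [hWp] using hgW p
  have hgT : ∀ i ≠ p, g i ∈ V i ∩ T := fun i hi => hW i hi ▸ hgW i
  refine ⟨g, ⟨hg, fun i => ?_⟩, hgp, fun i hi => Finset.mem_of_mem_inter_right (hgT i hi)⟩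
  by_cases hi : i = p
  · rwa [hi, hgp]
  · exact Finset.mem_of_mem_inter_left (hgT i hi)

end Rerouting

namespace IsMinMatching

variable [Fintype ι] [AddCommMonoid α] [LinearOrder α] [IsOrderedCancelAddMonoid α]

theorem mem_range_of_lt (hf : IsMinMatching V f) (hjr : Reaches V f j r) (hv : v ∈ V r)
    (hvj : v < f j) : v ∈ Set.range f := by
  classical
  by_contra hvf
  obtain ⟨g, hg, hgr, hgT⟩ := hf.exists_reroute hjr hv fun h =>
    hvf ((Finset.mem_image.1 h).imp fun _ => And.right)
  have himage : (Finset.univ.erase r).image g = (Finset.univ.erase j).image f := by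
    refine Finset.eq_of_subset_of_card_le
      (Finset.image_subset_iff.2 fun i hi => hgT i (Finset.ne_of_mem_erase hi)) ?_
    simp only [Finset.card_image_of_injective _ hf.injective,
      Finset.card_image_of_injective _ hg.injective, Finset.card_erase_of_mem, Finset.mem_univ,
      le_refl]
  have hsum : ∑ i ∈ Finset.univ.erase r, g i = ∑ i ∈ Finset.univ.erase j, f i := by
    calc ∑ i ∈ Finset.univ.erase r, g i
        = ∑ x ∈ (Finset.univ.erase r).image g, x := by
          rw [Finset.sum_image hg.injective.injOn]
      _ = ∑ i ∈ Finset.univ.erase j, f i := by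
        rw [himage, Finset.sum_image hf.injective.injOn]
  have hlt : ∑ i, g i < ∑ i, f i := by
    rw [← Finset.add_sum_erase _ g (Finset.mem_univ r), hgr, hsum,
      ← Finset.add_sum_erase _ f (Finset.mem_univ j)]
    exact add_lt_add_left hvj _
  exact hlt.not_ge (hf.sum_le g hg)

theorem isSaturated_reaches (hf : IsMinMatching V f) (j : ι) :
    IsSaturated V f {r | Reaches V f j r} (f j) := by
  intro r hr v hv hvj
  rcases hvj.eq_or_lt with rfl | hlt
  · exact ⟨j, .refl, rfl⟩
  · obtain ⟨l, rfl⟩ := hf.mem_range_of_lt hr hv hlt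
    exact ⟨l, .tail hr hv, rfl⟩

theorem exists_isMatching_isSaturated (hf : IsMinMatching V f) (hR : IsSourceComponent V f R)
    (hp : p ∈ R) (hv : v ∈ V p) (hvR : v ∈ f '' R) :
    ∃ g, IsMatching V g ∧ g p = v ∧ IsSaturated V g {r | Reaches V f j r} (f j) := by
  classical
  obtain ⟨l, hl, rfl⟩ := hvR
  obtain ⟨g, hg, hgp, hgT⟩ := hf.exists_reroute (hR.reaches hl hp) hv (by
    simp [hf.injective.eq_iff])
  have hrange : Set.range g ⊆ Set.range f := by
    rintro _ ⟨i, rfl⟩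
    by_cases hi : i = p
    · exact ⟨l, by rw [hi, hgp]⟩
    · exact (Finset.mem_image.1 (hgT i hi)).imp fun _ => And.right
  refine ⟨g, hg, hgp, fun r hr v hv hvj => ?_⟩
  rw [hf.image_eq_of_range_subset hg hrange fun _ hs _ harc => .tail hs harc]
  exact hf.isSaturated_reaches j r hr v hv hvj

theorem restrict_compl (hf : IsMinMatching V f) (hR : IsPredClosed V f R) [DecidablePred (· ∈ R)] :
    IsMinMatching (fun i : {i // i ∉ R} => V i) (fun i => f i) := by
  refine ⟨⟨hf.injective.comp Subtype.val_injective, fun i => hf.mem i⟩, fun g hg => ?_⟩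
  let h : ι → α := fun i => if hi : i ∈ R then f i else g ⟨i, hi⟩
  have hhR : ∀ i ∈ R, h i = f i := fun i hi => dif_pos hi
  have hhg : ∀ i (hi : i ∉ R), h i = g ⟨i, hi⟩ := fun i hi => dif_neg hi
  have hdisj : ∀ i ∈ R, ∀ l, f i ≠ g l := fun i hi l heq =>
    l.2 (hR (heq ▸ hg.mem l) hi)
  have hh : IsMatching V h := by
    refine ⟨fun i l hil => ?_, fun i => ?_⟩
    · by_cases hi : i ∈ R <;> by_cases hl : l ∈ R
      · rw [hhR i hi, hhR l hl] at hil
        exact hf.injective hil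
      · rw [hhR i hi, hhg l hl] at hil
        exact absurd hil (hdisj i hi _)
      · rw [hhg i hi, hhR l hl] at hil
        exact absurd hil.symm (hdisj l hl _)
      · rw [hhg i hi, hhg l hl] at hil
        exact congrArg Subtype.val (hg.injective hil)
    · by_cases hi : i ∈ R
      · exact hhR i hi ▸ hf.mem i
      · exact hhg i hi ▸ hg.mem ⟨i, hi⟩
  have hle := hf.sum_le h hh
  have hsumR : ∑ i : {i // i ∈ R}, h i = ∑ i : {i // i ∈ R}, f i :=
    Finset.sum_congr rfl fun i _ => hhR i.1 i.2
  have hsumRc : ∑ i : {i // i ∉ R}, h i = ∑ i : {i // i ∉ R}, g i :=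
    Finset.sum_congr rfl fun i _ => hhg i.1 i.2
  rw [← Fintype.sum_subtype_add_sum_subtype (· ∈ R) f,
    ← Fintype.sum_subtype_add_sum_subtype (· ∈ R) h, hsumR, hsumRc, add_le_add_iff_left] at hle
  exact hle

end IsMinMatching

end Matchings

section BlockDeterminants

variable {ι κ α 𝕜 : Type*} [DecidableEq ι] [DecidableEq κ] [Fintype κ] [CommRing 𝕜]

theorem IsPredClosed.det_submatrix_eq_mul [Fintype ι] {V : ι → Finset α} {f : ι → α} {R : Set ι}
    [DecidablePred (· ∈ R)] (hR : IsPredClosed V f R) (M : Matrix ι α 𝕜)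
    (hM : ∀ i j, f j ∉ V i → M i (f j) = 0) :
    (M.submatrix id f).det =
      (M.submatrix (fun i : {i // i ∈ R} => i.1) (fun i : {i // i ∈ R} => f i)).det *
        (M.submatrix (fun i : {i // i ∉ R} => i.1) (fun i : {i // i ∉ R} => f i)).det :=
  Matrix.twoBlockTriangular_det (M.submatrix id f) (· ∈ R) fun _ hi _ hj =>
    hM _ _ fun harc => hi (hR harc hj)

theorem det_submatrix_val_eq_of_eq_range {R : Set ι} [Fintype {i // i ∈ R}] {e : κ → ι}
    (hR : R = Set.range e) (he : Function.Injective e) (M : Matrix ι α 𝕜) (f : ι → α) :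
    (M.submatrix (fun i : {i // i ∈ R} => i.1) (fun i : {i // i ∈ R} => f i)).det =
      (M.submatrix e (f ∘ e)).det := by
  subst hR
  exact (Matrix.det_submatrix_equiv_self (Equiv.ofInjective e he) _).symm

end BlockDeterminants

/-- The two vertices of the edge at position `t` of a circle with `n` vertices that has been cut
open: the edge at position `t` ends in the vertex `t`, hence the edge `0` wraps around. -/
def edgeVertices (n t : ℕ) : Finset ℕ :=
  {if t = 0 then n - 1 else t - 1, t}

theorem mem_edgeVertices {n t v : ℕ} :
    v ∈ edgeVertices n t ↔ v + 1 = t ∨ v = t ∨ t = 0 ∧ v = n - 1 := by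
  simp only [edgeVertices, Finset.mem_insert, Finset.mem_singleton]
  split_ifs <;> omega

/-- A locally dense family of pairwise noncrossing chords, each joining two edges of a circle with
`n` vertices. The circle is cut open, and `left i ≤ right i` are the positions of the edges joined
by the chord `i`. -/
structure ChordDiagram (n : ℕ) (ι : Type*) where
  left : ι → ℕ
  right : ι → ℕ
  left_le_right : ∀ i, left i ≤ right i
  right_lt : ∀ i, right i < n
  noncrossing : ∀ i j, ¬ (left i < left j ∧ left j < right i ∧ right i < right j)
  dense : ∀ B : Finset ι, B.Nonempty →
    B.card + 3 ≤ (B.biUnion fun i => edgeVertices n (left i) ∪ edgeVertices n (right i)).card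

namespace ChordDiagram

variable {n : ℕ} {ι κ : Type*} (D : ChordDiagram n ι)

/-- The vertices of the two edges joined by a chord. -/
def support (i : ι) : Finset ℕ :=
  edgeVertices n (D.left i) ∪ edgeVertices n (D.right i)

/-- One of the two edges joined by the chord `i` is the one at position `t`. -/
def IsEnd (i : ι) (t : ℕ) : Prop :=
  D.left i = t ∨ D.right i = t

/-- The subfamily of chords indexed by an embedding. -/
def comap (e : κ ↪ ι) : ChordDiagram n κ where
  left := D.left ∘ e
  right := D.right ∘ e
  left_le_right i := D.left_le_right (e i)
  right_lt i := D.right_lt (e i)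
  noncrossing i j := D.noncrossing (e i) (e j)
  dense B hB := by
    classical
    have hdense := D.dense (B.map e) hB.map
    rwa [Finset.card_map, Finset.map_eq_image, Finset.image_biUnion] at hdense

theorem exists_mem_support_notMem [Finite ι] {Y : Set ι} (hY : Y.Nonempty) (τ : ι → ℕ) (b c : ℕ) :
    ∃ r ∈ Y, ∃ v ∈ D.support r, v ∉ τ '' Y ∧ v ≠ b ∧ v ≠ c := by
  classical
  have := Fintype.ofFinite ι
  by_contra! h
  have hsub : Y.toFinset.biUnion D.support ⊆ insert b (insert c (Y.toFinset.image τ)) := by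
    intro v hv
    obtain ⟨r, hr, hvr⟩ := Finset.mem_biUnion.1 hv
    have := h r (Set.mem_toFinset.1 hr) v hvr
    simp only [Finset.mem_insert, Finset.mem_image, Set.mem_toFinset]
    by_contra! hne
    exact hne.2.1 (this (fun ⟨i, hi, hiv⟩ => hne.2.2 i hi hiv) hne.1)
  have hle := (Finset.card_le_card hsub).trans ((Finset.card_insert_le _ _).trans
    (Nat.succ_le_succ ((Finset.card_insert_le _ _).trans
      (Nat.succ_le_succ Finset.card_image_le))))
  have hdense := D.dense Y.toFinset (Set.toFinset_nonempty.2 hY)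
  exact absurd (hdense.trans hle) (by omega)

theorem left_add_two_le_right [Finite ι] (i : ι) : D.left i + 2 ≤ D.right i := by
  obtain ⟨r, hr, v, hv, hleft, hright, hprev⟩ := D.exists_mem_support_notMem
    (Set.singleton_nonempty i) D.left (D.right i) (if D.left i = 0 then n - 1 else D.left i - 1)
  simp only [Set.image_singleton, Set.mem_singleton_iff] at hleft
  simp only [Set.mem_singleton_iff.1 hr, support, Finset.mem_union, mem_edgeVertices] at hv
  have := D.left_le_right i
  split_ifs at hprev <;> omega

theorem mem_support [Finite ι] {i : ι} {v : ℕ} : v ∈ D.support i ↔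
    v ∈ edgeVertices n (D.left i) ∨ v + 1 = D.right i ∨ v = D.right i := by
  have hright : D.right i ≠ 0 := by have := D.left_add_two_le_right i; omega
  simp only [support, Finset.mem_union, mem_edgeVertices (t := D.right i), hright, false_and,
    or_false]

theorem lt_of_mem_support {i : ι} {v : ℕ} (hv : v ∈ D.support i) : v < n := by
  simp only [support, Finset.mem_union, mem_edgeVertices] at hv
  have := D.left_le_right i
  have := D.right_lt i
  omega

end ChordDiagram

namespace ChordDiagram

section Geometry

variable {n : ℕ} {ι : Type*} {D : ChordDiagram n ι}

/-- Among the chords whose right end is one of the two edges at the vertex `t`, the chord `p` is the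
outermost one. It is encoded as the one with the greatest right end and, subject to this, the least
left end. -/
def IsOutermostAt (D : ChordDiagram n ι) (t : ℕ) (p : ι) : Prop :=
  (D.right p = t ∨ D.right p = t + 1) ∧ ∀ j, (D.right j = t ∨ D.right j = t + 1) →
    D.right j < D.right p ∨ D.right j = D.right p ∧ D.left p ≤ D.left j

/-- The chords of `Z` that are nested below the chord `p`. -/
def nested (D : ChordDiagram n ι) (p : ι) (Z : Set ι) : Set ι :=
  {r | r ∈ Z ∧ D.left p ≤ D.left r ∧ D.right r ≤ D.right p}

theorem exists_isOutermostAt [Finite ι] {i : ι} {t : ℕ}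
    (hi : D.right i = t ∨ D.right i = t + 1) : ∃ p, D.IsOutermostAt t p := by
  obtain ⟨p, hp, hmin⟩ := Set.exists_min_image {i | D.right i = t ∨ D.right i = t + 1}
    (fun i => toLex (t + 1 - D.right i, D.left i)) (Set.toFinite _) ⟨i, hi⟩
  refine ⟨p, hp, fun j hj => ?_⟩
  have hle := Prod.Lex.toLex_le_toLex.1 (hmin j hj)
  simp only [Set.mem_ofPred_eq] at hp
  simp only at hle
  omega

variable {f τ : ι → ℕ} {Z R : Set ι} {i j p r s : ι} {t u v : ℕ}

theorem mem_support_nested [Finite ι] (ht : t + 1 < n)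
    (hends : ∀ i, t ∈ D.support i → D.left i = t ∨ D.right i = t ∨ D.right i = t + 1)
    (hτ : IsMatching D.support τ) (hsat : IsSaturated D.support τ Z t)
    (hp : D.IsOutermostAt t p) (hr : r ∈ D.nested p Z) (hv : v ∈ D.support r) :
    v ∈ edgeVertices n (D.left p) ∨ (D.right p = t + 1 ∧ v = t + 1) ∨
      v ∈ τ '' D.nested p Z ∨ D.right p = t ∧ ∃ s, D.left s = t ∧ τ s = v := by
  by_contra! h
  obtain ⟨hvp, hvt, hvτ, hvs⟩ := h
  obtain ⟨hrZ, hleft, hright⟩ := hr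
  obtain ⟨hp, hmax⟩ := hp
  have := D.left_add_two_le_right r
  have hv' := D.mem_support.1 hv
  simp only [mem_edgeVertices] at hvp hv'
  -- By saturation `v` is matched to a chord of `Z`, which lies below `p` for want of crossings.
  obtain ⟨j, hjZ, rfl⟩ := hsat r hrZ v hv (by omega)
  refine hvτ ⟨j, ⟨hjZ, ?_⟩, rfl⟩
  have hj := D.mem_support.1 (hτ.mem j)
  have hj' := hends j
  have := hmax j
  have := D.noncrossing p j
  have := D.noncrossing j p
  have := D.left_add_two_le_right j
  have := fun h => hvs h j
  simp only [mem_edgeVertices] at hj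
  by_cases htj : τ j = t
  · have := hj' (htj ▸ hτ.mem j)
    omega
  · omega

variable [Fintype ι] (hf : IsMinMatching D.support f) (hR : IsSourceComponent D.support f R)
  (ht : IsGreatest (f '' R) t)

include hf

theorem add_one_lt_of_isMinMatching (j : ι) : f j + 1 < n := by
  by_contra! hn
  obtain ⟨r, hr, v, hv, hvf, -⟩ := D.exists_mem_support_notMem
    (Y := {r | Reaches D.support f j r}) ⟨j, .refl⟩ f 0 0
  refine hvf (hf.isSaturated_reaches j r hr v hv ?_)
  have := D.lt_of_mem_support hv
  omega

include ht

theorem eq_sub_one_or_eq_of_left_eq (hi : D.left i = t) (hv : v ∈ D.support i)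
    (hvR : v ∈ f '' R) : v = t - 1 ∨ v = t := by
  obtain ⟨j, -, hj⟩ := ht.1
  have := add_one_lt_of_isMinMatching hf j
  have := ht.2 hvR
  have := D.left_add_two_le_right i
  simp only [mem_support, mem_edgeVertices] at hv
  omega

include hR

theorem ends_of_greatest_mem_support (hR2 : R.Nontrivial) (hi : t ∈ D.support i) :
    D.left i = t ∨ D.right i = t ∨ D.right i = t + 1 := by
  have hiR := hR.isPredClosed.mem_of_mem ht.1 hi
  obtain ⟨v, hv, hvR, hvt⟩ := hR.exists_mem_ne hf.toIsMatching hR2 hiR t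
  have hvle := ht.2 hvR
  have htn : t + 1 < n := by
    obtain ⟨j, -, rfl⟩ := ht.1
    exact add_one_lt_of_isMinMatching hf j
  have := D.left_add_two_le_right i
  simp only [mem_support, mem_edgeVertices] at hi hv
  omega

theorem IsOutermostAt.notMem_image (hR2 : R.Nontrivial) (hp : D.IsOutermostAt t p)
    (hs : D.right p = t → {s | D.left s = t}.Subsingleton) (hu : u ∈ edgeVertices n (D.left p)) :
    u ∉ f '' R := by
  intro huR
  have hends i := ends_of_greatest_mem_support hf hR ht hR2 (i := i)
  obtain ⟨j, hj, rfl⟩ := ht.1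
  have hpR : p ∈ R := hR.isPredClosed.mem_of_mem ⟨j, hj, rfl⟩
    (D.mem_support.2 (by have := hp.1; omega))
  -- After rerouting `p` to `u`, the chords nested below `p` have at most two vertices, `b` and `c`,
  -- that are not matched to one of them, against density.
  obtain ⟨τ, hτ, rfl, hsat⟩ := hf.exists_isMatching_isSaturated (j := j) hR hpR
    (D.mem_support.2 (.inl hu)) huR
  set Z := {r | Reaches D.support f j r}
  have hpZ : p ∈ D.nested p Z := ⟨hR.reaches hj hpR, le_rfl, le_rfl⟩
  obtain ⟨b, hb⟩ : ∃ b, ∀ v ∈ edgeVertices n (D.left p), v = τ p ∨ v = b := by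
    simp only [edgeVertices, Finset.mem_insert, Finset.mem_singleton] at hu ⊢
    rcases hu with hu | hu
    · exact ⟨D.left p, fun v hv => hu ▸ hv⟩
    · exact ⟨_, fun v hv => hu ▸ hv.symm⟩
  obtain ⟨c, hc⟩ : ∃ c, (D.right p = f j + 1 → c = f j + 1) ∧
      (D.right p = f j → ∀ s, D.left s = f j → c = τ s) := by
    rcases hp.1 with hp | hp
    · by_cases hex : ∃ s, D.left s = f j
      · obtain ⟨s, hsl⟩ := hex
        exact ⟨τ s, by omega, fun _ s' hs' => by rw [hs hp hsl hs']⟩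
      · exact ⟨0, by omega, fun _ s hs => absurd ⟨s, hs⟩ hex⟩
    · exact ⟨f j + 1, by simp, by omega⟩
  obtain ⟨r, hr, v, hv, hvτ, hvb, hvc⟩ := D.exists_mem_support_notMem ⟨p, hpZ⟩ τ b c
  rcases mem_support_nested (add_one_lt_of_isMinMatching hf j) hends hτ hsat hp hr hv with
    h | ⟨h, rfl⟩ | h | ⟨h, s, hs, rfl⟩
  · rcases hb v h with rfl | h
    exacts [hvτ ⟨p, hpZ, rfl⟩, hvb h]
  · exact hvc (hc.1 h).symm
  · exact hvτ h
  · exact hvc (hc.2 h s hs).symm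

theorem right_ne_add_one (hR2 : R.Nontrivial) (i : ι) : D.right i ≠ t + 1 := by
  intro hi
  obtain ⟨p, hp⟩ := exists_isOutermostAt (.inr hi)
  have hright : D.right p = t + 1 := by have := hp.2 i (.inr hi); have := hp.1; omega
  have hpR := hR.isPredClosed.mem_of_mem ht.1
    (D.mem_support.2 (.inr (.inl hright.symm)))
  obtain ⟨v, hv, hvR, hvt⟩ := hR.exists_mem_ne hf.toIsMatching hR2 hpR t
  have hvle := ht.2 hvR
  refine hp.notMem_image hf hR ht hR2 (by omega) ?_ hvR
  exact (D.mem_support.1 hv).resolve_right (by omega)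

theorem IsOutermostAt.eq_sub_one_or_eq (hR2 : R.Nontrivial) (hp : D.IsOutermostAt t p)
    (hs : {s | D.left s = t}.Subsingleton) (hv : v ∈ D.support p) (hvR : v ∈ f '' R) :
    v = t - 1 ∨ v = t := by
  have hvp : v ∉ edgeVertices n (D.left p) := fun h =>
    hp.notMem_image hf hR ht hR2 (fun _ => hs) h hvR
  have := (D.mem_support.1 hv).resolve_left hvp
  have := hp.1
  have := right_ne_add_one hf hR ht hR2 p
  omega

theorem exists_left_eq_of_isOutermostAt (hR2 : R.Nontrivial) (hp : D.IsOutermostAt t p) :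
    ∃ s, D.left s = t := by
  by_contra! hs
  have hends i := ends_of_greatest_mem_support hf hR ht hR2 (i := i)
  obtain ⟨j, hj, rfl⟩ := ht.1
  have hpR : p ∈ R := hR.isPredClosed.mem_of_mem ⟨j, hj, rfl⟩
    (D.mem_support.2 (by have := hp.1; omega))
  have hpZ : p ∈ D.nested p {r | Reaches D.support f j r} :=
    ⟨hR.reaches hj hpR, le_rfl, le_rfl⟩
  obtain ⟨r, hr, v, hv, hvf, hvb, hvc⟩ := D.exists_mem_support_notMem ⟨p, hpZ⟩ f
    (if D.left p = 0 then n - 1 else D.left p - 1) (D.left p)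
  rcases mem_support_nested (add_one_lt_of_isMinMatching hf j) hends hf.toIsMatching
    (hf.isSaturated_reaches j) hp hr hv with h | ⟨h, -⟩ | h | ⟨-, s, h, -⟩
  · simp only [edgeVertices, Finset.mem_insert, Finset.mem_singleton] at h
    exact h.elim hvb hvc
  · exact right_ne_add_one hf hR ht hR2 p h
  · exact hvf h
  · exact hs s h

theorem exists_pair_of_nontrivial (hR2 : R.Nontrivial) :
    ∃ p ∈ R, ∃ q ∈ R, p ≠ q ∧ D.IsEnd p t ∧ D.IsEnd q t ∧
      (∀ v ∈ D.support p, v ∈ f '' R → v = t - 1 ∨ v = t) ∧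
      ∀ v ∈ D.support q, v ∈ f '' R → v = t - 1 ∨ v = t := by
  have hmem {i} (hi : D.IsEnd i t) : i ∈ R := hR.isPredClosed.mem_of_mem ht.1
    (D.mem_support.2 (hi.imp (fun h => mem_edgeVertices.2 (.inr (.inl h.symm)))
      fun h => .inr h.symm))
  have hends {i} (hi : t ∈ D.support i) : D.IsEnd i t := by
    rcases ends_of_greatest_mem_support hf hR ht hR2 hi with h | h | h
    exacts [.inl h, .inr h, absurd h (right_ne_add_one hf hR ht hR2 i)]
  have hcols {s} (hs : D.left s = t) v (hv : v ∈ D.support s) (hvR : v ∈ f '' R) :=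
    eq_sub_one_or_eq_of_left_eq hf ht hs hv hvR
  by_cases hleft : {s | D.left s = t}.Subsingleton
  · obtain ⟨j, hj, hjt⟩ := ht.1
    obtain ⟨i, -, hij, hi⟩ := hR.exists_ne_mem hR2 hj
    have hright : ∃ l, D.right l = t := by
      rcases hends (hjt ▸ hi) with hi | hi
      · refine ⟨j, (hends (hjt ▸ hf.mem j)).resolve_left fun hj => hij (hleft hi hj)⟩
      · exact ⟨i, hi⟩
    obtain ⟨l, hl⟩ := hright
    obtain ⟨p, hp⟩ := exists_isOutermostAt (.inl hl)
    obtain ⟨s, hs⟩ := exists_left_eq_of_isOutermostAt hf hR ht hR2 hp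
    have hpt : D.right p = t := hp.1.resolve_right (right_ne_add_one hf hR ht hR2 p)
    have := D.left_add_two_le_right p
    refine ⟨p, hmem (.inr hpt), s, hmem (.inl hs), ?_, .inr hpt, .inl hs,
      fun v => hp.eq_sub_one_or_eq hf hR ht hR2 hleft, hcols hs⟩
    rintro rfl
    omega
  · obtain ⟨p, hp, q, hq, hpq⟩ := Set.not_subsingleton_iff.1 hleft
    exact ⟨p, hmem (.inl hp), q, hmem (.inl hq), hpq, .inl hp, .inl hq, hcols hp, hcols hq⟩

theorem exists_eq_pair (hR2 : R.Nontrivial) :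
    ∃ p q, p ≠ q ∧ R = {p, q} ∧ f q = f p + 1 ∧ D.IsEnd p (f q) ∧ D.IsEnd q (f q) := by
  obtain ⟨p, hp, q, hq, hpq, hpt, hqt, hVp, hVq⟩ := exists_pair_of_nontrivial hf hR ht hR2
  obtain ⟨hRpq, hcols⟩ := hR.eq_pair hf.toIsMatching hp hq hpq hVp hVq
  have := hf.injective.ne hpq
  rcases hcols with ⟨hfp, hfq⟩ | ⟨hfp, hfq⟩
  · exact ⟨p, q, hpq, hRpq, by omega, hfq ▸ hpt, hfq ▸ hqt⟩
  · exact ⟨q, p, hpq.symm, by rw [hRpq, Set.pair_comm], by omega, hfp ▸ hqt, hfp ▸ hpt⟩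

end Geometry

section Factorization

variable {n : ℕ} {ι κ 𝕜 : Type*} [CommRing 𝕜] (D : ChordDiagram n ι) {f : ι → ℕ}
  (M : Matrix ι ℕ 𝕜)

/-- The factors that occur in the minors of `M`: an entry in the support of a chord, or the `2 × 2`
minor of two chords on the two vertices `t`, `t + 1` of an edge that both of them have as an end. -/
def IsBasicFactor (F : 𝕜) : Prop :=
  (∃ i, ∃ v ∈ D.support i, F = M i v) ∨
    ∃ p q t, p ≠ q ∧ D.IsEnd p (t + 1) ∧ D.IsEnd q (t + 1) ∧
      F = M p t * M q (t + 1) - M p (t + 1) * M q t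

variable {D M}

theorem IsBasicFactor.of_comap {e : κ ↪ ι} {F : 𝕜}
    (hF : (D.comap e).IsBasicFactor (M.submatrix e id) F) : D.IsBasicFactor M F := by
  rcases hF with ⟨i, v, hv, rfl⟩ | ⟨p, q, t, hpq, hp, hq, rfl⟩
  · exact .inl ⟨e i, v, hv, rfl⟩
  · exact .inr ⟨e p, e q, t, e.injective.ne hpq, hp, hq, rfl⟩

variable [Fintype ι] [DecidableEq ι]

theorem isBasicFactor_det_isSourceComponent (hf : IsMinMatching D.support f) {R : Set ι}
    [DecidablePred (· ∈ R)] (hR : IsSourceComponent D.support f R) :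
    D.IsBasicFactor M
      (M.submatrix (fun i : {i // i ∈ R} => i.1) fun i : {i // i ∈ R} => f i).det := by
  rcases R.subsingleton_or_nontrivial with hsub | hnt
  · obtain ⟨p, hp⟩ := hR.nonempty
    have hrange : R = Set.range ![p] := by
      rw [hsub.eq_singleton_of_mem hp, Matrix.range_cons, Matrix.range_empty, Set.union_empty]
    rw [det_submatrix_val_eq_of_eq_range hrange (Function.injective_of_subsingleton _),
      Matrix.det_unique]
    exact .inl ⟨p, f p, hf.mem p, rfl⟩
  · obtain ⟨j, hj, hmax⟩ := R.exists_max_image f R.toFinite hR.nonempty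
    obtain ⟨p, q, hpq, hRpq, hfq, hp, hq⟩ := exists_eq_pair hf hR
      ⟨Set.mem_image_of_mem f hj, Set.forall_mem_image.2 hmax⟩ hnt
    have hrange : R = Set.range ![p, q] := by
      rw [hRpq, Matrix.range_cons_cons_empty]
    have hinj : Function.Injective ![p, q] := by
      simpa [Function.Injective, Fin.forall_fin_two] using ⟨hpq, hpq.symm⟩
    rw [det_submatrix_val_eq_of_eq_range hrange hinj, Matrix.det_fin_two]
    refine .inr ⟨p, q, f p, hpq, hfq ▸ hp, hfq ▸ hq, ?_⟩
    simp [hfq]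

theorem exists_det_eq_prod (hf : IsMinMatching D.support f)
    (hM : ∀ i j, f j ∉ D.support i → M i (f j) = 0) :
    ∃ L : Multiset 𝕜, (M.submatrix id f).det = L.prod ∧ ∀ F ∈ L, D.IsBasicFactor M F := by
  classical
  induction hk : Fintype.card ι using Nat.strong_induction_on generalizing ι with
  | h k ih =>
    rcases isEmpty_or_nonempty ι with _ | _
    · exact ⟨0, by simp⟩
    obtain ⟨R, hR⟩ := exists_isSourceComponent D.support f
    obtain ⟨i, hi⟩ := hR.nonempty
    have hcard : Fintype.card {i // i ∉ R} < k := hk ▸ Fintype.card_subtype_lt (not_not_intro hi)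
    obtain ⟨L, hL, hLF⟩ := ih _ hcard (D := D.comap (.subtype (· ∉ R))) (M := M.submatrix (↑) id)
      (hf.restrict_compl hR.isPredClosed) (fun i j => hM i j) rfl
    refine ⟨_ ::ₘ L, ?_, Multiset.forall_mem_cons.2
      ⟨isBasicFactor_det_isSourceComponent hf hR, fun F hF => (hLF F hF).of_comap⟩⟩
    rw [hR.isPredClosed.det_submatrix_eq_mul M hM, Multiset.prod_cons, ← hL]
    rfl

end Factorization

end ChordDiagram

section CyclicPositions

variable {n : ℕ} [NeZero n] {ι : Type*}

theorem keyW_injective (a : ZMod n) : Function.Injective (keyW a) := fun _ _ h =>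
  sub_left_injective (ZMod.val_injective n h)

theorem add_natCast_keyW (a v : ZMod n) : a + (keyW a v : ZMod n) = v := by
  rw [keyW, ZMod.natCast_zmod_val, add_sub_cancel]

theorem val_sub_eq_keyW_sub (a u w : ZMod n) :
    (u - w).val = if keyW a w ≤ keyW a u then keyW a u - keyW a w
      else keyW a u + n - keyW a w := by
  have hmod : keyW a u = ((u - w).val + keyW a w) % n := by
    rw [keyW, keyW, ← ZMod.val_add, sub_add_sub_cancel]
  have h := ZMod.val_lt (u - w)
  have hw : keyW a w < n := ZMod.val_lt _
  rcases lt_or_ge ((u - w).val + keyW a w) n with hlt | hge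
  · rw [Nat.mod_eq_of_lt hlt] at hmod
    split_ifs <;> omega
  · rw [Nat.mod_eq_sub_mod hge, Nat.mod_eq_of_lt (by omega)] at hmod
    split_ifs <;> omega

/-- The position of the edge `e` on the circle cut open at the vertex `a`, which is the position of
its second vertex `e + 1`. -/
def edgePos (a e : ZMod n) : ℕ := keyW a (e + 1)

theorem image_keyW_edge (a e : ZMod n) :
    ({e, e + 1} : Finset (ZMod n)).image (keyW a) = edgeVertices n (edgePos a e) := by
  have he : keyW a e = if edgePos a e = 0 then n - 1 else edgePos a e - 1 := by
    have hn := NeZero.pos n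
    have hlt : keyW a e < n := ZMod.val_lt _
    have hmod : edgePos a e = (keyW a e + 1) % n := by
      rw [edgePos, keyW, keyW, ← ZMod.val_natCast, Nat.cast_add, ZMod.natCast_zmod_val,
        Nat.cast_one, sub_add_eq_add_sub]
    rcases Nat.lt_or_ge (keyW a e + 1) n with h | h
    · rw [hmod, Nat.mod_eq_of_lt h, if_neg (Nat.succ_ne_zero _), Nat.add_sub_cancel]
    · rw [hmod, show keyW a e + 1 = n by omega, Nat.mod_self, if_pos rfl]
      omega
  rw [Finset.image_insert, Finset.image_singleton, edgeVertices, ← he, edgePos]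

theorem image_keyW_propSupp (a : ZMod n) (p : ZMod n × ZMod n) :
    (propSupp p).image (keyW a) =
      edgeVertices n (min (edgePos a p.1) (edgePos a p.2)) ∪
        edgeVertices n (max (edgePos a p.1) (edgePos a p.2)) := by
  have hedges : propSupp p = {p.1, p.1 + 1} ∪ {p.2, p.2 + 1} := by
    rw [propSupp, Finset.insert_union, Finset.singleton_union]
  rw [hedges, Finset.image_union, image_keyW_edge, image_keyW_edge]
  rcases le_total (edgePos a p.1) (edgePos a p.2) with h | h
  · rw [min_eq_left h, max_eq_right h]
  · rw [min_eq_right h, max_eq_left h, Finset.union_comm]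

theorem cross_of_edgePos_lt (a : ZMod n) {p q : ZMod n × ZMod n}
    (h₁ : min (edgePos a p.1) (edgePos a p.2) < min (edgePos a q.1) (edgePos a q.2))
    (h₂ : min (edgePos a q.1) (edgePos a q.2) < max (edgePos a p.1) (edgePos a p.2))
    (h₃ : max (edgePos a p.1) (edgePos a p.2) < max (edgePos a q.1) (edgePos a q.2)) :
    Cross p q := by
  have hval (b c : ZMod n) : (b - c).val = if edgePos a c ≤ edgePos a b
      then edgePos a b - edgePos a c else edgePos a b + n - edgePos a c := by
    rw [← add_sub_add_right_eq_sub b c 1]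
    exact val_sub_eq_keyW_sub a _ _
  have hlt (e : ZMod n) : edgePos a e < n := ZMod.val_lt _
  have := hlt p.1
  have := hlt p.2
  have := hlt q.1
  have := hlt q.2
  simp only [Cross, Inside, hval]
  generalize edgePos a p.1 = p₁, edgePos a p.2 = p₂, edgePos a q.1 = q₁, edgePos a q.2 = q₂ at *
  rcases le_total p₁ p₂ with hp | hp <;> rcases le_total q₁ q₂ with hq | hq <;>
    simp only [min_eq_left hp, min_eq_right hp, max_eq_left hp, max_eq_right hp, min_eq_left hq,
      min_eq_right hq, max_eq_left hq, max_eq_right hq] at h₁ h₂ h₃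
  · left; split_ifs <;> omega
  · right; split_ifs <;> omega
  · right; split_ifs <;> omega
  · left; split_ifs <;> omega

end CyclicPositions

section Minors

variable {k n : ℕ} {P : Fin k → ZMod n × ZMod n} {S : Finset (ZMod n)} {G : Fin k → ZMod n}

theorem MWpoly_eq_X_of_edge {i : Fin k} {e : ZMod n}
    (h : (P i).1 = e ∨ (P i).2 = e) :
    MWpoly k n P i e = X (i, e) ∧ MWpoly k n P i (e + 1) = X (i, e + 1) := by
  constructor <;> refine if_pos ?_ <;> rcases h with rfl | rfl <;> simp [propSupp]

theorem exists_minorW_image_eq (P : Fin k → ZMod n × ZMod n) (hG : Function.Injective G) :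
    ∃ ε : ℝ, (ε = 1 ∨ ε = -1) ∧
      minorW k n P (Finset.univ.image G) = C ε * ((MWpoly k n P).submatrix id G).det := by
  set T := Finset.univ.image G
  have hcard : T.card = k := by
    rw [Finset.card_image_of_injective _ hG, Finset.card_univ, Fintype.card_fin]
  let enum : Fin k → ZMod n := fun i => T.equivFin.symm (Fin.cast hcard.symm i)
  let π : Fin k → Fin k := fun i =>
    Fin.cast hcard (T.equivFin ⟨G i, Finset.mem_image_of_mem G (Finset.mem_univ i)⟩)
  have hπ (i) : enum (π i) = G i := by simp [enum, π]
  have hinj : Function.Injective π := fun i j hij => hG (by rw [← hπ, ← hπ, hij])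
  let σ := Equiv.ofBijective π (Finite.injective_iff_bijective.1 hinj)
  have hσ : (MWpoly k n P).submatrix id G = ((MWpoly k n P).submatrix id enum).submatrix id σ :=
    Matrix.ext fun i j => congrArg (MWpoly k n P i) (hπ j).symm
  rw [hσ, Matrix.det_permute' σ, minorW, dif_pos hcard]
  rcases Int.units_eq_one_or (Equiv.Perm.sign σ) with h | h
  · exact ⟨1, .inl rfl, by simp [h, enum]⟩
  · exact ⟨-1, .inr rfl, by simp [h, enum]⟩

theorem IsMatching.det_MWpoly_submatrix_ne_zero (hG : IsMatching (fun i => propSupp (P i)) G) :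
    ((MWpoly k n P).submatrix id G).det ≠ 0 := by
  intro h0
  -- Setting `x_{p,v}` to `1` if `v` is matched to `p`, and to `0` otherwise, turns the submatrix
  -- into the identity.
  let φ : WR k n →+* ℝ := eval fun x => if x.2 = G x.1 then 1 else 0
  have hone : φ.mapMatrix ((MWpoly k n P).submatrix id G) = 1 := by
    ext i j
    simp only [RingHom.mapMatrix_apply, Matrix.map_apply, Matrix.submatrix_apply, id, MWpoly,
      Matrix.of_apply, Matrix.one_apply]
    rcases eq_or_ne i j with rfl | hij
    · simp [hG.mem, φ]
    · have hGij : G j ≠ G i := hG.injective.ne hij.symm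
      split_ifs <;> simp [φ, hGij]
  have := RingHom.map_det φ ((MWpoly k n P).submatrix id G)
  simp [h0, hone] at this

theorem exists_isMatching_of_minorW_ne_zero (hS : minorW k n P S ≠ 0) :
    ∃ G, IsMatching (fun i => propSupp (P i)) G ∧ Finset.univ.image G = S := by
  unfold minorW at hS
  split_ifs at hS with hcard
  · rw [Matrix.det_apply] at hS
    obtain ⟨σ, -, hσ⟩ := Finset.exists_ne_zero_of_sum_ne_zero hS
    have hentry := Finset.prod_ne_zero_iff.1 (right_ne_zero_of_smul hσ)
    refine ⟨fun i => S.equivFin.symm (Fin.cast hcard.symm (σ.symm i)), ⟨?_, fun i => ?_⟩, ?_⟩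
    · intro i j hij
      simpa using Subtype.ext hij
    · by_contra hi
      refine hentry (σ.symm i) (Finset.mem_univ _) ?_
      simp only [Matrix.submatrix_apply, Equiv.apply_symm_apply, id, MWpoly, Matrix.of_apply]
      exact if_neg hi
    · ext v
      simp only [Finset.mem_image, Finset.mem_univ, true_and]
      constructor
      · rintro ⟨i, rfl⟩
        exact Subtype.property _
      · intro hv
        exact ⟨σ (Fin.cast hcard (S.equivFin ⟨v, hv⟩)), by simp⟩
  · exact absurd rfl hS

theorem IsMatching.isBasisW_image (hG : IsMatching (fun i => propSupp (P i)) G) :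
    IsBasisW k n P (Finset.univ.image G) := by
  obtain ⟨ε, hε, hminor⟩ := exists_minorW_image_eq P hG.injective
  refine ⟨by rw [Finset.card_image_of_injective _ hG.injective, Finset.card_univ,
    Fintype.card_fin], hminor ▸ mul_ne_zero ?_ (hG.det_MWpoly_submatrix_ne_zero)⟩
  rcases hε with rfl | rfl <;> simp

variable [NeZero n] {a : ZMod n}

theorem GaleLEat.sum_le {T : Finset (ZMod n)} (h : GaleLEat a S T) :
    ∑ v ∈ S, keyW a v ≤ ∑ v ∈ T, keyW a v := by
  have hsort (U : Finset (ZMod n)) :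
      ((U.image (keyW a)).sort (· ≤ ·)).sum = ∑ v ∈ U, keyW a v := by
    rw [← Multiset.sum_coe, Finset.sort_eq, Finset.sum_val,
      Finset.sum_image (keyW_injective a).injOn]
    rfl
  rw [← hsort, ← hsort]
  exact List.Forall₂.sum_le_sum h

theorem NecklaceAt.exists_isMinMatching (hS : NecklaceAt k n P a S) :
    ∃ G, Function.Injective G ∧ Finset.univ.image G = S ∧
      IsMinMatching (fun i => (propSupp (P i)).image (keyW a)) (keyW a ∘ G) := by
  obtain ⟨G, hG, rfl⟩ := exists_isMatching_of_minorW_ne_zero hS.1.2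
  refine ⟨G, hG.injective, rfl, hG.image (keyW_injective a), fun g hg => ?_⟩
  obtain ⟨H, hH, rfl⟩ := hg.exists_eq_comp
  have hle := (hS.2 _ hH.isBasisW_image).sum_le
  rwa [Finset.sum_image hG.injective.injOn, Finset.sum_image hH.injective.injOn] at hle

end Minors

section WilsonLoops

variable {n : ℕ}

theorem Admissible.card_add_three_le {ι : Type*} [Fintype ι] {P : ι → ZMod n × ZMod n}
    (hW : Admissible n (Multiset.map P Finset.univ.val)) {B : Finset ι} (hB : B.Nonempty) :
    B.card + 3 ≤ (B.biUnion fun i => propSupp (P i)).card := by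
  have hsupp : multiSupp (Multiset.map P B.val) = B.biUnion fun i => propSupp (P i) := by
    rw [multiSupp, Multiset.map_map, ← Finset.sup_def, Finset.sup_eq_biUnion]
    rfl
  have hdense := hW.2.1 (Multiset.map P B.val)
    (Multiset.map_le_map (Finset.val_le_iff.2 B.subset_univ))
    (by simpa using hB.ne_empty)
  rwa [hsupp, Multiset.card_map] at hdense

variable [NeZero n]

/-- The chord diagram of a family of propagators, on the circle cut open at the vertex `a`. -/
def ChordDiagram.ofPropagators {ι : Type*} (P : ι → ZMod n × ZMod n) (a : ZMod n)
    (hcross : ∀ i j, ¬ Cross (P i) (P j))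
    (hdense : ∀ B : Finset ι, B.Nonempty →
      B.card + 3 ≤ (B.biUnion fun i => propSupp (P i)).card) : ChordDiagram n ι where
  left i := min (edgePos a (P i).1) (edgePos a (P i).2)
  right i := max (edgePos a (P i).1) (edgePos a (P i).2)
  left_le_right _ := min_le_max
  right_lt _ := max_lt (ZMod.val_lt _) (ZMod.val_lt _)
  noncrossing i j h := hcross i j (cross_of_edgePos_lt a h.1 h.2.1 h.2.2)
  dense B hB := by
    have h := hdense B hB
    rw [← Finset.card_image_of_injective _ (keyW_injective a), Finset.biUnion_image] at h
    simpa only [image_keyW_propSupp] using h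

theorem ChordDiagram.support_ofPropagators {ι : Type*} {P : ι → ZMod n × ZMod n} {a : ZMod n}
    {hcross hdense} : (ofPropagators P a hcross hdense).support =
      fun i => (propSupp (P i)).image (keyW a) :=
  funext fun i => (image_keyW_propSupp a (P i)).symm

theorem eq_add_natCast_of_edgePos_eq {a e : ZMod n} {t : ℕ} (h : edgePos a e = t + 1) :
    e = a + t := by
  have := add_natCast_keyW a (e + 1)
  rw [show keyW a (e + 1) = t + 1 from h, Nat.cast_add, Nat.cast_one, ← add_assoc] at this
  exact (add_right_cancel this).symm

theorem ChordDiagram.IsEnd.fst_or_snd_eq {ι : Type*} {P : ι → ZMod n × ZMod n} {a : ZMod n}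
    {hcross hdense} {i : ι} {t : ℕ} (h : (ofPropagators P a hcross hdense).IsEnd i (t + 1)) :
    (P i).1 = a + t ∨ (P i).2 = a + t := by
  have hend : edgePos a (P i).1 = t + 1 ∨ edgePos a (P i).2 = t + 1 := by
    simp only [IsEnd, ofPropagators] at h
    omega
  exact hend.imp eq_add_natCast_of_edgePos_eq eq_add_natCast_of_edgePos_eq

theorem ChordDiagram.IsBasicFactor.exists_eq_X_or_eq_sub {k : ℕ} {P : Fin k → ZMod n × ZMod n}
    {a : ZMod n} {hcross hdense} {F : WR k n}
    (hF : (ofPropagators P a hcross hdense).IsBasicFactor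
      ((MWpoly k n P).submatrix id fun t : ℕ => a + t) F) :
    (∃ (p : Fin k) (v : ZMod n), F = X (p, v)) ∨
      ∃ (p q : Fin k) (e : ZMod n), p ≠ q ∧
        ((P p).1 = e ∨ (P p).2 = e) ∧ ((P q).1 = e ∨ (P q).2 = e) ∧
        F = X (p, e) * X (q, e + 1) - X (p, e + 1) * X (q, e) := by
  rcases hF with ⟨p, v, hv, rfl⟩ | ⟨p, q, t, hpq, hp, hq, rfl⟩
  · rw [support_ofPropagators] at hv
    obtain ⟨w, hw, rfl⟩ := Finset.mem_image.1 hv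
    refine .inl ⟨p, w, ?_⟩
    rw [Matrix.submatrix_apply, add_natCast_keyW]
    exact if_pos hw
  · have hMp := MWpoly_eq_X_of_edge hp.fst_or_snd_eq
    have hMq := MWpoly_eq_X_of_edge hq.fst_or_snd_eq
    refine .inr ⟨p, q, a + t, hpq, hp.fst_or_snd_eq, hq.fst_or_snd_eq, ?_⟩
    simp only [Matrix.submatrix_apply, id, Nat.cast_add, Nat.cast_one, ← add_assoc, hMp, hMq]

theorem statement6_general (k n : ℕ) [NeZero n] (P : Fin k → ZMod n × ZMod n)
    (hcross : ∀ i j, ¬ Cross (P i) (P j))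
    (hdense : ∀ B : Finset (Fin k), B.Nonempty →
      B.card + 3 ≤ (B.biUnion fun i => propSupp (P i)).card)
    (a : ZMod n) (S : Finset (ZMod n)) (hS : NecklaceAt k n P a S) :
    ∃ (ε : ℝ) (L : Multiset (WR k n)), (ε = 1 ∨ ε = -1) ∧
      minorW k n P S = C ε * L.prod ∧
      ∀ f ∈ L,
        (∃ (p : Fin k) (v : ZMod n), f = X (p, v)) ∨
        (∃ (p q : Fin k) (e : ZMod n), p ≠ q ∧
          ((P p).1 = e ∨ (P p).2 = e) ∧ ((P q).1 = e ∨ (P q).2 = e) ∧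
          f = X (p, e) * X (q, e + 1) - X (p, e + 1) * X (q, e)) := by
  obtain ⟨G, hG, rfl, hmin⟩ := hS.exists_isMinMatching
  let D := ChordDiagram.ofPropagators P a hcross hdense
  let M : Matrix (Fin k) ℕ (WR k n) := (MWpoly k n P).submatrix id fun t : ℕ => a + t
  have hsupp : D.support = fun i => (propSupp (P i)).image (keyW a) :=
    ChordDiagram.support_ofPropagators
  have hM : ∀ i j, (keyW a ∘ G) j ∉ D.support i → M i ((keyW a ∘ G) j) = 0 := by
    intro i j hij
    rw [hsupp, Function.comp_apply] at hij
    simp only [M, Matrix.submatrix_apply, Function.comp_apply, add_natCast_keyW]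
    exact if_neg fun h => hij (Finset.mem_image_of_mem _ h)
  obtain ⟨L, hL, hLF⟩ := D.exists_det_eq_prod (hsupp ▸ hmin) hM
  obtain ⟨ε, hε, hminor⟩ := exists_minorW_image_eq P hG
  have hsub : (MWpoly k n P).submatrix id G = M.submatrix id (keyW a ∘ G) := by
    ext1 i j
    simp only [M, Matrix.submatrix_apply, Function.comp_apply, add_natCast_keyW, id]
  exact ⟨ε, L, hε, by rw [hminor, hsub, hL], fun f hf => (hLF f hf).exists_eq_X_or_eq_sub⟩

end WilsonLoops

/-- for an admissible Wilson loop diagram, each Grassmann necklace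
minor `Δ_{I_a}(x)` is, up to sign, a product of polynomials each of which is either
a single variable `x_{p,v}` or a `2×2` determinant
`x_{p,e} x_{q,e+1} − x_{p,e+1} x_{q,e}` with `p ≠ q` both incident to the edge `e`. -/
theorem statement6 (k n : ℕ) (P : Fin k → ZMod n × ZMod n)
    (hW : Admissible n (Multiset.map P Finset.univ.val))
    (a : ZMod n) (S : Finset (ZMod n)) (hS : NecklaceAt k n P a S) :
    ∃ (ε : ℝ) (L : Multiset (WR k n)), (ε = 1 ∨ ε = -1) ∧
      minorW k n P S = C ε * L.prod ∧
      ∀ f ∈ L,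
        (∃ (p : Fin k) (v : ZMod n), f = X (p, v)) ∨
        (∃ (p q : Fin k) (e : ZMod n), p ≠ q ∧
          ((P p).1 = e ∨ (P p).2 = e) ∧ ((P q).1 = e ∨ (P q).2 = e) ∧
          f = X (p, e) * X (q, e + 1) - X (p, e + 1) * X (q, e)) := by
  have : NeZero n := ⟨by have := hW.2.2; omega⟩
  have hmem i : P i ∈ Multiset.map P Finset.univ.val :=
    Multiset.mem_map_of_mem P (Finset.mem_univ i)
  exact statement6_general k n P (fun i j => hW.1 _ (hmem i) _ (hmem j))
    (fun _ hB => hW.card_add_three_le hB) a S hS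
end

section
/- For every admissible Wilson loop diagram W = (𝒫,[n]) with k propagators, the column matroid of M_{V(𝒫)} is a positroid: there exists a real k×n matrix of rank k with all k×k minors nonnegative whose column matroid equals the column matroid of M_{V(𝒫)}. -/
open MvPolynomial

/-- Linear independence over `F` of the columns of a matrix indexed by a set `S`. -/
def ColsIndepW {k n : ℕ} {F : Type*} [Field F] (M : Matrix (Fin k) (ZMod n) F)
    (S : Finset (ZMod n)) : Prop :=
  LinearIndependent F (fun j : {x : ZMod n // x ∈ S} => fun i : Fin k => M i (j : ZMod n))

section MaximalMinors

variable {R ι κ : Type*} [CommRing R] {k : ℕ}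

/-- Nonnegativity of the maximal minors of a matrix with `k` rows, which for real matrices of rank
`k` says that the row space lies in the totally nonnegative Grassmannian. Repeated columns are
allowed, since they only add zero minors, so that the condition can be checked on monotone rather
than strictly monotone choices of columns. -/
def MaximalMinorsNonneg [LE R] [Preorder ι] (A : Matrix (Fin k) ι R) : Prop :=
  ∀ f : Fin k → ι, Monotone f → 0 ≤ (A.submatrix id f).det

theorem MaximalMinorsNonneg.of_strictMono [Preorder R] [PartialOrder ι] {A : Matrix (Fin k) ι R}
    (h : ∀ f : Fin k → ι, StrictMono f → 0 ≤ (A.submatrix id f).det) :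
    MaximalMinorsNonneg A := by
  intro f hf
  by_cases hinj : Function.Injective f
  · exact h f (hf.strictMono_of_injective hinj)
  · obtain ⟨s, t, hst, hne⟩ := Function.not_injective_iff.1 hinj
    exact (Matrix.det_zero_of_column_eq hne fun q => by simp [hst]).ge

theorem det_submatrix_mul_transvection [Fintype ι] [DecidableEq ι] [Fintype κ] [DecidableEq κ]
    (A : Matrix κ ι R) (w : ι) (c : R) {f : κ → ι} (hf : Function.Injective f) (s : κ) :
    ((A * Matrix.transvection w (f s) c).submatrix id f).det =
      (A.submatrix id f).det + c * (A.submatrix id (Function.update f s w)).det := by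
  have hcol : (A * Matrix.transvection w (f s) c).submatrix id f =
      (A.submatrix id f).updateCol s ((A.submatrix id f).col s + c • A.col w) := by
    ext q t
    rcases eq_or_ne t s with rfl | ht
    · simp
    · simp [ht, hf.ne ht]
  have hupdate : A.submatrix id (Function.update f s w) =
      (A.submatrix id f).updateCol s (A.col w) := by
    ext q t
    rcases eq_or_ne t s with rfl | ht
    · simp
    · simp [ht]
  rw [hcol, hupdate, Matrix.det_updateCol_add, Matrix.det_updateCol_smul]
  congr 2
  exact Matrix.updateCol_eq_self _ _

theorem det_submatrix_snoc (A : Matrix (Fin (k + 1)) ι R) (g : Fin k → ι) (w : ι) :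
    (A.submatrix id (Fin.snoc g w : Fin (k + 1) → ι)).det =
      (-1) ^ k * (A.submatrix id (Fin.cons w g : Fin (k + 1) → ι)).det := by
  have h := Matrix.det_permute' (finRotate (k + 1))
    (A.submatrix id (Fin.cons w g : Fin (k + 1) → ι))
  rw [Matrix.submatrix_submatrix] at h
  rw [Fin.snoc_eq_cons_rotate]
  simpa [Function.comp_def] using h

theorem prod_succAbove_lt_neg_one (t : Fin (k + 1)) :
    ∏ u, (if t.succAbove u < t then (-1 : R) else 1) = (-1) ^ (t : ℕ) := by
  have h := Fin.prod_univ_succAbove (fun u => if u < t then (-1 : R) else 1) t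
  rw [if_neg (lt_irrefl t), one_mul] at h
  rw [← h, Finset.prod_ite, Finset.filter_gt_eq_Iio]
  simp

theorem monotone_snoc [Preorder ι] {g : Fin k → ι} (hg : Monotone g) {w : ι} (hw : ∀ i, g i ≤ w) :
    Monotone (Fin.snoc g w : Fin (k + 1) → ι) := by
  intro i j hij
  induction j using Fin.lastCases with
  | last =>
    induction i using Fin.lastCases with
    | last => rfl
    | cast i => simpa using hw i
  | cast j =>
    induction i using Fin.lastCases with
    | last => exact absurd hij (Fin.castSucc_lt_last j).not_ge
    | cast i => simpa using hg (Fin.castSucc_le_castSucc_iff.1 hij)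

theorem monotone_update_of_covBy {α β : Type*} [LinearOrder α] [LinearOrder β]
    {f : α → β} (hf : StrictMono f) {s : α} {w : β} (h : f s ⋖ w ∨ w ⋖ f s) :
    Monotone (Function.update f s w) := by
  intro i j hij
  rcases eq_or_ne i s with rfl | hi <;> rcases eq_or_ne j i with rfl | hji
  · rfl
  · have hlt := hf (lt_of_le_of_ne hij hji.symm)
    rw [Function.update_self, Function.update_of_ne hji]
    exact h.elim (fun h => h.ge_of_gt hlt) fun h => h.le.trans hlt.le
  · rfl
  · have hlt := hf (lt_of_le_of_ne hij hji.symm)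
    rw [Function.update_of_ne hi]
    rcases eq_or_ne j s with rfl | hj
    · rw [Function.update_self]
      exact h.elim (fun h => hlt.le.trans h.le) fun h => h.le_of_lt hlt
    · rw [Function.update_of_ne hj]
      exact hlt.le

theorem det_sign_mul_submatrix_comp_succAbove [LinearOrder ι] {A : Matrix (Fin k) ι R} {v : ι}
    {f : Fin (k + 1) → ι} {t : Fin (k + 1)} (h : ∀ u ≠ t, f u ≤ v ↔ u < t) :
    ((Matrix.of fun q u => (if u ≤ v then -1 else 1) * A q u).submatrix id
      (f ∘ t.succAbove)).det = (-1) ^ (t : ℕ) * (A.submatrix id (f ∘ t.succAbove)).det := by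
  rw [← prod_succAbove_lt_neg_one, ← Matrix.det_mul_row]
  congr 1
  ext q u
  simp [h _ (Fin.succAbove_ne t u)]

theorem le_iff_lt_of_notMem_Ioo [LinearOrder κ] [LinearOrder ι] {f : κ → ι} (hf : StrictMono f)
    {v w : ι} (hvw : v ≤ w) (hgap : ∀ u, f u ∉ Set.Ioo v w) {t : κ} (ht : f t = v ∨ f t = w)
    {u : κ} (hu : u ≠ t) : f u ≤ v ↔ u < t := by
  have hne : f u ≠ f t := hf.injective.ne hu
  rw [← hf.lt_iff_lt]
  rcases ht with ht | ht
  · rw [← ht]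
    exact ⟨fun h => h.lt_of_ne hne, le_of_lt⟩
  · rw [ht] at hne ⊢
    exact ⟨fun h => (h.trans hvw).lt_of_ne hne,
      fun h => not_lt.1 fun hlt => hgap u ⟨hlt, h⟩⟩

variable [PartialOrder R] [IsOrderedRing R] [LinearOrder ι]

theorem MaximalMinorsNonneg.mul_transvection [Fintype ι] {A : Matrix (Fin k) ι R}
    (hA : MaximalMinorsNonneg A) {v w : ι} {c : R}
    (h : ∀ f : Fin k → ι, StrictMono f → ∀ s, f s = v →
      0 ≤ c * (A.submatrix id (Function.update f s w)).det) :
    MaximalMinorsNonneg (A * Matrix.transvection w v c) := by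
  refine .of_strictMono fun f hf => ?_
  by_cases hv : ∃ s, f s = v
  · obtain ⟨s, rfl⟩ := hv
    rw [det_submatrix_mul_transvection A w c hf.injective]
    exact add_nonneg (hA f hf.monotone) (h f hf s rfl)
  · have hcols : (A * Matrix.transvection w v c).submatrix id f = A.submatrix id f := by
      ext q t
      simp [not_exists.1 hv t]
    exact hcols ▸ hA f hf.monotone

theorem MaximalMinorsNonneg.mul_transvection_of_covBy [Fintype ι] {A : Matrix (Fin k) ι R}
    (hA : MaximalMinorsNonneg A) {v w : ι} (hvw : v ⋖ w ∨ w ⋖ v) {c : R} (hc : 0 ≤ c) :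
    MaximalMinorsNonneg (A * Matrix.transvection w v c) := by
  refine hA.mul_transvection fun f hf s hs => mul_nonneg hc (hA _ ?_)
  exact monotone_update_of_covBy hf (hs ▸ hvw)

theorem MaximalMinorsNonneg.mul_transvection_top_bot [Fintype ι] {A : Matrix (Fin (k + 1)) ι R}
    (hA : MaximalMinorsNonneg A) {v w : ι} (hv : IsBot v) (hw : IsTop w) {c : R}
    (hc : 0 ≤ (-1) ^ k * c) : MaximalMinorsNonneg (A * Matrix.transvection w v c) := by
  refine hA.mul_transvection fun f hf s hs => ?_
  obtain rfl : s = 0 :=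
    le_antisymm (hf.le_iff_le.1 (hs ▸ hv (f 0))) (Fin.zero_le s)
  have hupdate : Function.update f 0 w = Fin.cons w (Fin.tail f) := by
    rw [← Fin.cons_self_tail f, Fin.update_cons_zero, Fin.tail_cons]
  have hsnoc := hA _ (monotone_snoc (hf.monotone.comp Fin.strictMono_succ.monotone)
    fun i => hw (f i.succ))
  rw [det_submatrix_snoc] at hsnoc
  calc 0 ≤ (-1) ^ k * c * ((-1) ^ k * (A.submatrix id (Fin.cons w (Fin.tail f))).det) :=
        mul_nonneg hc hsnoc
    _ = ((-1) ^ k * (-1) ^ k) * (c * (A.submatrix id (Fin.cons w (Fin.tail f))).det) := by ring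
    _ = c * (A.submatrix id (Function.update f 0 w)).det := by
        rw [← mul_pow, neg_one_mul, neg_neg, one_pow, one_mul, hupdate]

theorem MaximalMinorsNonneg.insertNth {M : Matrix (Fin k) ι R} (hM : MaximalMinorsNonneg M)
    (p : Fin (k + 1)) {v w : ι} (hvw : v ≤ w) (hgap : ∀ q, ∀ u ∈ Set.Ioo v w, M q u = 0)
    {r : ι → R} (hr : ∀ u, 0 ≤ (-1) ^ (p : ℕ) * r u) (hr₀ : ∀ u, u ≠ v → u ≠ w → r u = 0) :
    MaximalMinorsNonneg (Matrix.of (p.insertNth r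
      fun q u => (if u ≤ v then -1 else 1) * M q u)) := by
  set A : Matrix (Fin (k + 1)) ι R := Matrix.of (p.insertNth r
    fun q u => (if u ≤ v then -1 else 1) * M q u) with hA
  refine .of_strictMono fun f hf => ?_
  by_cases hcol : ∃ t, f t ∈ Set.Ioo v w
  · obtain ⟨t, ht⟩ := hcol
    refine (Matrix.det_eq_zero_of_column_eq_zero t fun q => ?_).ge
    induction q using p.succAboveCases with
    | x => simpa [hA] using hr₀ _ ht.1.ne' ht.2.ne
    | p q => simp [hA, hgap q _ ht]
  -- The sign flips cancel the cofactor signs: the columns `≤ v` are exactly those left of `t`.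
  rw [Matrix.det_succ_row _ p]
  refine Finset.sum_nonneg fun t _ => ?_
  have hrow : A.submatrix id f p t = r (f t) := by simp [hA]
  by_cases ht : f t = v ∨ f t = w
  · have hminor : ((A.submatrix id f).submatrix p.succAbove t.succAbove).det =
        (-1) ^ (t : ℕ) * (M.submatrix id (f ∘ t.succAbove)).det := by
      rw [← det_sign_mul_submatrix_comp_succAbove fun u hu =>
        le_iff_lt_of_notMem_Ioo hf hvw (not_exists.1 hcol) ht hu]
      congr 1
      ext q u
      simp [hA]
    have hsign : (-1 : R) ^ (t : ℕ) * (-1) ^ (t : ℕ) = 1 := by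
      rw [← mul_pow, neg_one_mul, neg_neg, one_pow]
    calc 0 ≤ (-1) ^ (p : ℕ) * r (f t) * (M.submatrix id (f ∘ t.succAbove)).det :=
          mul_nonneg (hr _) (hM _ (hf.comp (Fin.strictMono_succAbove t)).monotone)
      _ = (-1) ^ (p + t : ℕ) * A.submatrix id f p t *
            ((A.submatrix id f).submatrix p.succAbove t.succAbove).det := by
          rw [hrow, hminor, pow_add]
          linear_combination
            -(-1) ^ (p : ℕ) * r (f t) * (M.submatrix id (f ∘ t.succAbove)).det * hsign
  · rw [not_or] at ht
    rw [hrow, hr₀ _ ht.1 ht.2, mul_zero, zero_mul]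

end MaximalMinors

section Filling

open Filter Topology

variable {ι κ : Type*} {k : ℕ}

/-- The real matrix with zero pattern `S` whose remaining entries are read off from the
parameters `x`. The unused parameters are kept, so that fillings of all patterns share one
parameter space. -/
noncomputable def filling (S : κ → Set ι) (x : κ → ι → ℝ) : Matrix κ ι ℝ :=
  Matrix.of fun q => (S q).indicator (x q)

theorem filling_apply_of_mem {S : κ → Set ι} {q : κ} {u : ι} (h : u ∈ S q) (x : κ → ι → ℝ) :
    filling S x q u = x q u :=
  Set.indicator_of_mem h _

theorem filling_apply_of_notMem {S : κ → Set ι} {q : κ} {u : ι} (h : u ∉ S q) (x : κ → ι → ℝ) :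
    filling S x q u = 0 :=
  Set.indicator_of_notMem h _

theorem continuous_filling_apply (S : κ → Set ι) (q : κ) (u : ι) :
    Continuous fun x => filling S x q u := by
  by_cases h : u ∈ S q
  · simp only [filling_apply_of_mem h]
    fun_prop
  · simp only [filling_apply_of_notMem h]
    fun_prop

theorem filling_insertNth (S : Fin k → Set ι) (p : Fin (k + 1)) (s : Set ι) (ε : ι → ℝ)
    (hε : ∀ u, ε u * ε u = 1) (x : Fin (k + 1) → ι → ℝ) :
    filling (p.insertNth s S) x = Matrix.of (p.insertNth (s.indicator (x p))
      fun q u => ε u * filling S (fun q u => ε u * x (p.succAbove q) u) q u) := by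
  ext q u
  induction q using p.succAboveCases with
  | x => simp [filling]
  | p q => by_cases hu : u ∈ S q <;> simp [filling, hu, ← mul_assoc, hε]

section ColumnSubtraction

variable [DecidableEq ι] [DecidableEq κ]

/-- The parameters obtained by subtracting from column `v` of a filling the multiple of column `w`
that clears the entry in row `p`. That entry becomes irrelevant for the resulting zero pattern and
is set to `t`. -/
noncomputable def columnSubtraction (S : κ → Set ι) (p : κ) (v w : ι) (t : ℝ) (x : κ → ι → ℝ) :
    κ → ι → ℝ :=
  fun q u => if u = v then if q = p then t else x q v - x p v / x p w * filling S x q w else x q u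

theorem continuousAt_columnSubtraction (S : κ → Set ι) {p : κ} (v : ι) {w : ι} (t : ℝ)
    {x : κ → ι → ℝ} (hx : x p w ≠ 0) : ContinuousAt (columnSubtraction S p v w t) x := by
  have hentry : ∀ q u, ContinuousAt (fun y : κ → ι → ℝ => y q u) x := fun q u =>
    (continuous_apply_apply q u).continuousAt
  refine continuousAt_pi.2 fun q => continuousAt_pi.2 fun u => ?_
  have hfill : ContinuousAt (fun y => filling S y q w) x :=
    (continuous_filling_apply S q w).continuousAt
  simp only [columnSubtraction]
  split_ifs
  exacts [continuousAt_const,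
    (hentry q v).sub (((hentry p v).div (hentry p w) hx).mul hfill), hentry q u]

theorem exists_columnSubtraction_eq {S : κ → Set ι} {p : κ} {v w : ι} (hwv : w ≠ v)
    {y : κ → ι → ℝ} (hy : y p w ≠ 0) {σ : ℝ} (hσ : σ ≠ 0) :
    ∃ x, columnSubtraction S p v w (y p v) x = y ∧ 0 < σ * (x p v * x p w) := by
  refine ⟨fun q u => if u = v then if q = p then σ * y p w else y q v + σ * filling S y q w
    else y q u, ?_, ?_⟩
  · ext q u
    by_cases hu : u = v <;> by_cases hq : q = p <;> by_cases hwq : w ∈ S q <;>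
      simp [columnSubtraction, filling, hu, hq, hwv, hy, hwq]
  · have hsq : 0 < (σ * y p w) ^ 2 := by positivity
    simp only [if_true, if_neg hwv]
    linarith

theorem filling_columnSubtraction_mul_transvection [Fintype ι] {S : κ → Set ι} {p : κ} {v w : ι}
    (hv : v ∉ S p) (hw : w ∈ S p) (hwv : ∀ q ≠ p, w ∈ S q → v ∈ S q) (t : ℝ) {x : κ → ι → ℝ}
    (hx : x p w ≠ 0) :
    filling S (columnSubtraction S p v w t x) * Matrix.transvection w v (x p v / x p w) =
      filling (Function.update S p (insert v (S p))) x := by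
  have hne : w ≠ v := fun h => hv (h ▸ hw)
  have hfill : ∀ q, ∀ u ≠ v, filling S (columnSubtraction S p v w t x) q u = filling S x q u :=
    fun q u hu => by by_cases h : u ∈ S q <;> simp [filling, columnSubtraction, h, hu]
  ext q u
  rcases eq_or_ne u v with rfl | hu
  · rw [Matrix.mul_transvection_apply_same, hfill q w hne]
    rcases eq_or_ne q p with rfl | hqp
    · simp [filling, hv, hw, hx]
    · by_cases h : u ∈ S q
      · simp [filling, columnSubtraction, h, hqp]
      · have hwq : w ∉ S q := fun h' => h (hwv q hqp h')
        simp [filling, h, hqp, hwq]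
  · rw [Matrix.mul_transvection_apply_of_ne _ _ _ _ hu, hfill q u hu]
    rcases eq_or_ne q p with rfl | hqp
    · by_cases h : u ∈ S q <;> simp [filling, h, hu]
    · simp [filling, hqp]

end ColumnSubtraction

/-- The zero pattern `S` admits a full-dimensional family of matrices with nonnegative maximal
minors. Full-dimensionality leaves room to choose a generic member. -/
def RobustlyNonneg (S : Fin k → Set ι) [Preorder ι] : Prop :=
  ∃ x : Fin k → ι → ℝ, ∀ᶠ y in 𝓝 x, MaximalMinorsNonneg (filling S y)

theorem RobustlyNonneg.of_rows_zero [Preorder ι] (S : Fin 0 → Set ι) : RobustlyNonneg S :=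
  ⟨0, .of_forall fun x f _ => by simp⟩

variable [LinearOrder ι]

theorem RobustlyNonneg.insertNth {S : Fin k → Set ι} (hS : RobustlyNonneg S) (p : Fin (k + 1))
    {v w : ι} (hvw : v ≤ w) (hgap : ∀ q, ∀ u ∈ Set.Ioo v w, u ∉ S q) :
    RobustlyNonneg (p.insertNth {v, w} S : Fin (k + 1) → Set ι) := by
  obtain ⟨y, hy⟩ := hS
  let ε : ι → ℝ := fun u => if u ≤ v then -1 else 1
  have hε : ∀ u, ε u * ε u = 1 := fun u => by simp only [ε]; split_ifs <;> norm_num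
  let unsign : (Fin (k + 1) → ι → ℝ) → Fin k → ι → ℝ := fun x q u => ε u * x (p.succAbove q) u
  let x₀ : Fin (k + 1) → ι → ℝ := p.insertNth (fun _ => (-1) ^ (p : ℕ)) fun q u => ε u * y q u
  have hx₀ : unsign x₀ = y := by
    ext q u
    simp [unsign, x₀, ← mul_assoc, hε]
  have hpos : ∀ u, ∀ᶠ x in 𝓝 x₀, 0 < (-1) ^ (p : ℕ) * x p u := fun u => by
    refine (isOpen_lt (by fun_prop) (by fun_prop)).mem_nhds ?_
    simp [x₀, ← mul_pow]
  have hcont : ContinuousAt unsign x₀ := by fun_prop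
  refine ⟨x₀, ?_⟩
  filter_upwards [hpos v, hpos w, hcont.eventually (hx₀ ▸ hy)] with x hxv hxw hx
  rw [filling_insertNth S p _ ε hε]
  refine hx.insertNth p hvw (fun q u hu => filling_apply_of_notMem (hgap q u hu) _)
    (fun u => ?_) fun u huv huw => by simp [huv, huw]
  by_cases hu : u = v ∨ u = w
  · rcases hu with rfl | rfl <;> simp [hxv.le, hxw.le]
  · simp [hu]

theorem RobustlyNonneg.exists_apply_ne_zero {S : Fin k → Set ι} (hS : RobustlyNonneg S)
    (p : Fin k) (w : ι) :
    ∃ x : Fin k → ι → ℝ, x p w ≠ 0 ∧ ∀ᶠ y in 𝓝 x, MaximalMinorsNonneg (filling S y) := by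
  obtain ⟨x, hx⟩ := hS
  have hopen : IsOpenMap fun y : Fin k → ι → ℝ => y p w :=
    (isOpenMap_eval w).comp (isOpenMap_eval p)
  have hdense : Dense {y : Fin k → ι → ℝ | y p w ≠ 0} :=
    (dense_compl_singleton (0 : ℝ)).preimage hopen
  exact ((mem_closure_iff_frequently.1 (hdense x)).and_eventually hx.eventually_nhds).exists

theorem RobustlyNonneg.update_insert [Fintype ι] {S : Fin k → Set ι} (hS : RobustlyNonneg S)
    {p : Fin k} {v w : ι} (hw : w ∈ S p) (hwv : ∀ q ≠ p, w ∈ S q → v ∈ S q) {σ : ℝ} (hσ : σ ≠ 0)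
    (hadd : ∀ (A : Matrix (Fin k) ι ℝ) (c : ℝ), MaximalMinorsNonneg A → 0 ≤ σ * c →
      MaximalMinorsNonneg (A * Matrix.transvection w v c)) :
    RobustlyNonneg (Function.update S p (insert v (S p))) := by
  by_cases hv : v ∈ S p
  · rwa [Set.insert_eq_of_mem hv, Function.update_eq_self]
  have hne : w ≠ v := fun h => hv (h ▸ hw)
  obtain ⟨y, hyw, hy⟩ := hS.exists_apply_ne_zero p w
  obtain ⟨x₀, hx₀, hx₀pos⟩ := exists_columnSubtraction_eq (S := S) hne hyw hσ
  have hw_ne : ∀ x : Fin k → ι → ℝ, 0 < σ * (x p v * x p w) → x p w ≠ 0 :=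
    fun x hx h => by simp [h] at hx
  have hpos : ∀ᶠ x in 𝓝 x₀, 0 < σ * (x p v * x p w) :=
    (isOpen_lt (by fun_prop) (by fun_prop)).mem_nhds hx₀pos
  have hcont := continuousAt_columnSubtraction S v (y p v) (hw_ne x₀ hx₀pos)
  refine ⟨x₀, ?_⟩
  filter_upwards [hpos, hcont.eventually (hx₀ ▸ hy)] with x hxpos hx
  have hxw := hw_ne x hxpos
  rw [← filling_columnSubtraction_mul_transvection hv hw hwv (y p v) hxw]
  refine hadd _ _ hx ?_
  calc 0 ≤ σ * (x p v * x p w) / x p w ^ 2 := by positivity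
    _ = σ * (x p v / x p w) := by field_simp

theorem RobustlyNonneg.update_insert_of_covBy [Finite ι] {S : Fin k → Set ι}
    (hS : RobustlyNonneg S) {p : Fin k} {v w : ι} (hvw : v ⋖ w ∨ w ⋖ v) (hw : w ∈ S p)
    (hwv : ∀ q ≠ p, w ∈ S q → v ∈ S q) :
    RobustlyNonneg (Function.update S p (insert v (S p))) :=
  have := Fintype.ofFinite ι
  hS.update_insert hw hwv one_ne_zero fun _ _ hA hc =>
    hA.mul_transvection_of_covBy hvw (by simpa using hc)

theorem RobustlyNonneg.update_insert_top_bot [Finite ι] {S : Fin (k + 1) → Set ι}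
    (hS : RobustlyNonneg S) {p : Fin (k + 1)} {v w : ι} (hv : IsBot v) (hw : IsTop w)
    (hwp : w ∈ S p) (hwv : ∀ q ≠ p, w ∈ S q → v ∈ S q) :
    RobustlyNonneg (Function.update S p (insert v (S p))) :=
  have := Fintype.ofFinite ι
  hS.update_insert hwp hwv (pow_ne_zero k (neg_ne_zero.2 one_ne_zero)) fun _ _ hA hc =>
    hA.mul_transvection_top_bot hv hw hc

theorem RobustlyNonneg.of_removeNth [Finite ι] {S : Fin (k + 1) → Set ι} {p : Fin (k + 1)}
    (hS : RobustlyNonneg (p.removeNth S)) {a a' b b' : ι} (hp : S p = {b', a, a', b})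
    (ha : a ⋖ a') (hab : a' ≤ b) (hb : b ⋖ b' ∨ IsTop b ∧ IsBot b')
    (hadd : ∀ q ≠ p, a' ∈ S q → a ∈ S q) (hbdd : ∀ q ≠ p, b ∈ S q → b' ∈ S q)
    (hgap : ∀ q ≠ p, ∀ u ∈ Set.Ioo a' b, u ∉ S q) : RobustlyNonneg S := by
  have hfirst := hS.insertNth p hab fun q => hgap _ (p.succAbove_ne q)
  rw [Fin.insertNth_removeNth] at hfirst
  have hsecond := hfirst.update_insert_of_covBy (p := p) (.inl ha) (by simp)
    fun q hq => by simpa [hq] using hadd q hq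
  rw [Function.update_self, Function.update_idem] at hsecond
  have hbmem : b ∈ Function.update S p {a, a', b} p := by simp
  have himp : ∀ q ≠ p, b ∈ Function.update S p {a, a', b} q →
      b' ∈ Function.update S p {a, a', b} q := fun q hq => by simpa [hq] using hbdd q hq
  have hthird : RobustlyNonneg (Function.update (Function.update S p {a, a', b}) p
      (insert b' (Function.update S p {a, a', b} p))) := by
    rcases hb with hb | ⟨hb, hb'⟩
    · exact hsecond.update_insert_of_covBy (.inr hb) hbmem himp
    · exact hsecond.update_insert_top_bot hb' hb hbmem himp
  rwa [Function.update_self, Function.update_idem, ← hp, Function.update_eq_self] at hthird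

end Filling

section Propagators

variable {n : ℕ}

theorem propSupp_swap (p : ZMod n × ZMod n) : propSupp p.swap = propSupp p := by
  ext v
  simp only [propSupp, Prod.fst_swap, Prod.snd_swap, Finset.mem_insert, Finset.mem_singleton]
  tauto

theorem cross_swap_left {p q : ZMod n × ZMod n} : Cross p.swap q ↔ Cross p q := by
  simp only [Cross, Prod.fst_swap, Prod.snd_swap]
  tauto

theorem cross_swap_right {p q : ZMod n × ZMod n} : Cross p q.swap ↔ Cross p q :=
  or_comm

theorem mem_propSupp_iff_eq_or_exists_add_one_eq {p : ZMod n × ZMod n} {v : ZMod n} :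
    v ∈ propSupp p ↔ (v = p.1 ∨ v = p.2) ∨ ∃ x, (x = p.1 ∨ x = p.2) ∧ x + 1 = v := by
  simp only [propSupp, Finset.mem_insert, Finset.mem_singleton, or_and_right, exists_or,
    exists_eq_left]
  tauto

theorem nodup_of_four_le_card_propSupp {p : ZMod n × ZMod n} (hp : 4 ≤ (propSupp p).card) :
    [p.1, p.1 + 1, p.2, p.2 + 1].Nodup := by
  have heq : propSupp p =
      ((↑[p.1, p.1 + 1, p.2, p.2 + 1] : Multiset (ZMod n))).toFinset := by
    ext
    simp [propSupp]
  rw [heq] at hp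
  rw [← Multiset.coe_nodup, ← Multiset.toFinset_card_eq_card_iff_nodup]
  exact le_antisymm (Multiset.toFinset_card_le _) hp

variable [NeZero n]

/-- The order `0 < 1 < ⋯ < n - 1` in which the columns of a matrix indexed by `ZMod n` are
read. -/
abbrev valLinearOrder (n : ℕ) [NeZero n] : LinearOrder (ZMod n) :=
  LinearOrder.lift' ZMod.val (ZMod.val_injective n)

attribute [local instance] valLinearOrder

theorem lt_iff_val_lt_val {a b : ZMod n} : a < b ↔ a.val < b.val :=
  Iff.rfl

theorem val_sub_eq_ite (a b : ZMod n) :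
    (a - b).val = if b ≤ a then a.val - b.val else n + a.val - b.val := by
  split_ifs with h
  · exact ZMod.val_sub h
  · have hlt : a.val < b.val := not_le.1 h
    have hne : b - a ≠ 0 := sub_ne_zero.2 (not_le.1 h).ne'
    rw [← neg_sub, ZMod.neg_val, if_neg hne, ZMod.val_sub hlt.le]
    have := ZMod.val_lt b
    omega

theorem inside_iff_of_lt {a b c : ZMod n} (h : a < c) : Inside a b c ↔ b ∈ Set.Ioo a c := by
  simp only [Inside, val_sub_eq_ite, Set.mem_Ioo, ← not_lt, lt_iff_val_lt_val] at h ⊢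
  have := ZMod.val_lt c
  split_ifs <;> omega

theorem inside_iff_of_gt {a b c : ZMod n} (h : c < a) : Inside a b c ↔ b ∉ Set.Icc c a := by
  simp only [Inside, val_sub_eq_ite, Set.mem_Icc, ← not_lt, lt_iff_val_lt_val] at h ⊢
  have := ZMod.val_lt b
  have := ZMod.val_lt a
  split_ifs <;> omega

theorem covBy_add_one_or_isTop (x : ZMod n) : x ⋖ x + 1 ∨ IsTop x ∧ IsBot (x + 1) := by
  have hval : (x + 1).val = (x.val + 1) % n := by
    rw [ZMod.val_add, ZMod.val_one_eq_one_mod, Nat.add_mod_mod]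
  rcases Nat.lt_or_eq_of_le (Nat.succ_le_of_lt (ZMod.val_lt x)) with h | h
  · rw [Nat.mod_eq_of_lt h] at hval
    refine .inl ⟨?_, fun c hxc hc => ?_⟩ <;> rw [lt_iff_val_lt_val] at * <;> omega
  · rw [← Nat.succ_eq_add_one, h, Nat.mod_self] at hval
    refine .inr ⟨fun c => ?_, fun c => ?_⟩
    · have := ZMod.val_lt c
      change c.val ≤ x.val
      omega
    · exact hval.trans_le (Nat.zero_le _)

theorem exists_eq_or_eq_swap_and_lt {p : ZMod n × ZMod n} (hp : 4 ≤ (propSupp p).card) :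
    ∃ q, (q = p ∨ q = p.swap) ∧ q.1 < q.2 ∧ q.1 + 1 ≠ q.2 := by
  have hnodup := nodup_of_four_le_card_propSupp hp
  simp only [List.nodup_cons, List.mem_cons, List.not_mem_nil, or_false, not_or] at hnodup
  obtain ⟨⟨-, hne, hne'⟩, ⟨hadd, -⟩, -⟩ := hnodup
  rcases lt_or_gt_of_ne hne with hlt | hlt
  · exact ⟨p, .inl rfl, hlt, hadd⟩
  · exact ⟨p.swap, .inr rfl, hlt, Ne.symm hne'⟩

theorem exists_forall_notMem_Ioo_of_not_cross {κ : Type*} [Finite κ] [Nonempty κ]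
    {P : κ → ZMod n × ZMod n} (hlt : ∀ q, (P q).1 < (P q).2)
    (hcross : ∀ p q, ¬ Cross (P p) (P q)) :
    ∃ p, ∀ q, (P q).1 ∉ Set.Ioo (P p).1 (P p).2 ∧ (P q).2 ∉ Set.Ioo (P p).1 (P p).2 := by
  obtain ⟨p, hp⟩ := Finite.exists_min fun q => (P q).2.val - (P q).1.val
  refine ⟨p, fun q => ?_⟩
  have hpq := hcross p q
  have hq := hlt q
  have hmin := hp q
  simp only [Cross, inside_iff_of_lt (hlt p), inside_iff_of_gt (hlt p), Set.mem_Ioo, Set.mem_Icc,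
    ← not_lt, lt_iff_val_lt_val] at hpq hq ⊢
  omega

theorem covBy_add_one_of_lt {a b : ZMod n} (hab : a < b) : a ⋖ a + 1 :=
  (covBy_add_one_or_isTop a).resolve_right fun h => (h.1 b).not_gt hab

theorem mem_Ioo_of_add_one_mem_Ioc {a b x : ZMod n} (hab : a < b)
    (hx : x + 1 ∈ Set.Ioc (a + 1) b) : x ∈ Set.Ioo a b := by
  rcases covBy_add_one_or_isTop x with hcov | ⟨-, hbot⟩
  · exact ⟨(covBy_add_one_of_lt hab).lt.trans_le (hcov.le_of_lt hx.1), hcov.lt.trans_le hx.2⟩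
  · exact absurd hx.1 (hbot _).not_gt

theorem robustlyNonneg_propSupp_of_lt {k : ℕ} {P : Fin k → ZMod n × ZMod n}
    (hlt : ∀ q, (P q).1 < (P q).2) (hadj : ∀ q, (P q).1 + 1 ≠ (P q).2)
    (hcross : ∀ p q, ¬ Cross (P p) (P q)) :
    RobustlyNonneg fun q => (propSupp (P q) : Set (ZMod n)) := by
  induction k with
  | zero => exact .of_rows_zero _
  | succ k ih =>
    obtain ⟨p, hp⟩ := exists_forall_notMem_Ioo_of_not_cross hlt hcross
    generalize ha : (P p).1 = a at hp
    generalize hb : (P p).2 = b at hp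
    have hab : a < b := ha ▸ hb ▸ hlt p
    have hacov : a ⋖ a + 1 := covBy_add_one_of_lt hab
    have hab' : a + 1 < b := (hacov.ge_of_gt hab).lt_of_ne (ha ▸ hb ▸ hadj p)
    have hend : ∀ q, ∀ x ∈ Set.Ioo a b, ¬ (x = (P q).1 ∨ x = (P q).2) := by
      rintro q x hx (rfl | rfl)
      exacts [(hp q).1 hx, (hp q).2 hx]
    have hinner : ∀ q, ∀ v ∈ Set.Ioc (a + 1) b, v ∈ propSupp (P q) →
        v = (P q).1 ∨ v = (P q).2 := by
      rintro q v hv hmem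
      refine (mem_propSupp_iff_eq_or_exists_add_one_eq.1 hmem).resolve_right ?_
      rintro ⟨x, hx, rfl⟩
      exact hend q x (mem_Ioo_of_add_one_mem_Ioc hab hv) hx
    refine .of_removeNth (p := p) (b' := b + 1)
      (ih (fun _ => hlt _) (fun _ => hadj _) fun _ _ => hcross _ _) ?_ hacov hab'.le
      (covBy_add_one_or_isTop b) (fun q _ hq => ?_) (fun q _ hq => ?_) fun q _ u hu hq => ?_
    · ext v
      simp only [propSupp, ha, hb, Finset.coe_insert, Finset.coe_singleton, Set.mem_insert_iff,
        Set.mem_singleton_iff]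
      tauto
    · rcases mem_propSupp_iff_eq_or_exists_add_one_eq.1 hq with h | ⟨x, hx, hxa⟩
      · exact absurd h (hend q _ ⟨hacov.lt, hab'⟩)
      · exact mem_propSupp_iff_eq_or_exists_add_one_eq.2 (.inl (add_right_cancel hxa ▸ hx))
    · exact mem_propSupp_iff_eq_or_exists_add_one_eq.2 (.inr ⟨b, hinner q b ⟨hab', le_rfl⟩ hq, rfl⟩)
    · exact hend q u ⟨hacov.lt.trans hu.1, hu.2⟩ (hinner q u ⟨hu.1, hu.2.le⟩ hq)

theorem robustlyNonneg_propSupp {k : ℕ} {P : Fin k → ZMod n × ZMod n}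
    (hsupp : ∀ q, 4 ≤ (propSupp (P q)).card) (hcross : ∀ p q, ¬ Cross (P p) (P q)) :
    RobustlyNonneg fun q => (propSupp (P q) : Set (ZMod n)) := by
  choose Q hQ hlt hadj using fun q => exists_eq_or_eq_swap_and_lt (hsupp q)
  have hpropSupp : ∀ q, propSupp (Q q) = propSupp (P q) := fun q => by
    rcases hQ q with h | h <;> rw [h]
    exact propSupp_swap _
  have hcrossQ : ∀ p q, ¬ Cross (Q p) (Q q) := fun p q => by
    rcases hQ p with hp | hp <;> rcases hQ q with hq | hq <;>
      simpa only [hp, hq, cross_swap_left, cross_swap_right] using hcross p q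
  simpa only [hpropSupp] using robustlyNonneg_propSupp_of_lt hlt hadj hcrossQ

end Propagators

section GenericPoint

open Filter Topology

variable {R σ : Type*} [CommRing R] [IsDomain R] [TopologicalSpace R] [T1Space R]
  [∀ x : R, (𝓝[≠] x).NeBot]

theorem frequently_eval_ne_zero {p : MvPolynomial σ R} (hp : p ≠ 0) (x : σ → R) :
    ∃ᶠ y in 𝓝 x, eval y p ≠ 0 := by
  refine fun h => hp ?_
  rw [Filter.Eventually, nhds_pi, Filter.mem_pi] at h
  obtain ⟨I, -, t, ht, hI⟩ := h
  refine funext_set t (fun i => infinite_of_mem_nhds (x i) (ht i)) fun y hy => ?_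
  rw [map_zero]
  exact not_not.1 (hI fun i _ => hy i trivial)

theorem frequently_forall_eval_eq_zero_iff {α : Type*} [Finite α] (p : α → MvPolynomial σ R)
    (x : σ → R) : ∃ᶠ y in 𝓝 x, ∀ i, eval y (p i) = 0 ↔ p i = 0 := by
  classical
  have := Fintype.ofFinite α
  have hprod : ∏ i with p i ≠ 0, p i ≠ 0 :=
    Finset.prod_ne_zero_iff.2 fun i hi => (Finset.mem_filter.1 hi).2
  refine (frequently_eval_ne_zero hprod x).mono fun y hy i => ⟨fun hi => ?_, fun hi => ?_⟩
  · rw [map_prod, Finset.prod_ne_zero_iff] at hy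
    by_contra hpi
    exact hy i (Finset.mem_filter.2 ⟨Finset.mem_univ i, hpi⟩) hi
  · rw [hi, map_zero]

end GenericPoint

section ColumnMatroid

variable {F κ ι : Type*} [Field F]

theorem linearIndepOn_iff_exists_linearIndependent_comp {V : Type*} [AddCommGroup V] [Module F V]
    {v : ι → V} (hv : Submodule.span F (Set.range v) = ⊤) (B : Module.Basis κ F V) {s : Set ι} :
    LinearIndepOn F v s ↔ ∃ f : κ → ι, LinearIndependent F (v ∘ f) ∧ s ⊆ Set.range f := by
  constructor
  · intro hs
    obtain ⟨t, -, hst, hspan, ht⟩ := exists_linearIndepOn_extension hs (Set.subset_univ s)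
    rw [Set.image_univ, ← Submodule.span_le, hv, Set.image_eq_range] at hspan
    let e := (Module.Basis.mk ht hspan).indexEquiv B
    exact ⟨fun i => e.symm i, ht.comp _ e.symm.injective, fun i hi => ⟨e ⟨i, hst hi⟩, by simp⟩⟩
  · rintro ⟨f, hf, hs⟩
    have hinj : Function.Injective f := .of_comp hf.injective
    exact ((linearIndepOn_range_iff hinj v).2 hf).mono hs

variable [Fintype κ] [DecidableEq κ] {M : Matrix κ ι F}

theorem linearIndependent_col_comp_iff {f : κ → ι} :
    LinearIndependent F (M.col ∘ f) ↔ (M.submatrix id f).det ≠ 0 := by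
  rw [← isUnit_iff_ne_zero, ← Matrix.isUnit_iff_isUnit_det]
  exact Matrix.linearIndependent_cols_iff_isUnit (A := M.submatrix id f)

theorem linearIndepOn_col_iff_exists_det_ne_zero {f₀ : κ → ι}
    (h₀ : (M.submatrix id f₀).det ≠ 0) {s : Set ι} :
    LinearIndepOn F M.col s ↔ ∃ f : κ → ι, (M.submatrix id f).det ≠ 0 ∧ s ⊆ Set.range f := by
  have hspan : Submodule.span F (Set.range M.col) = ⊤ := by
    refine top_unique ?_
    rw [← (linearIndependent_col_comp_iff.2 h₀).span_eq_top_of_card_eq_finrank' (by simp)]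
    exact Submodule.span_mono (Set.range_comp_subset_range f₀ M.col)
  simp only [linearIndepOn_iff_exists_linearIndependent_comp hspan (Pi.basisFun F κ),
    linearIndependent_col_comp_iff]

theorem rank_eq_card_of_det_submatrix_ne_zero [Fintype ι] {f₀ : κ → ι}
    (h₀ : (M.submatrix id f₀).det ≠ 0) : M.rank = Fintype.card κ := by
  refine le_antisymm M.rank_le_card_height ?_
  rw [← Matrix.rank_of_isUnit _ ((Matrix.isUnit_iff_isUnit_det _).2 h₀.isUnit)]
  exact Matrix.rank_submatrix_le M id f₀

end ColumnMatroid

section WilsonLoopDiagram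

open Filter Topology

variable {k n : ℕ} {P : Fin k → ZMod n × ZMod n}

theorem colsIndepW_iff_exists_det_ne_zero {F : Type*} [Field F] {M : Matrix (Fin k) (ZMod n) F}
    {f₀ : Fin k → ZMod n} (h₀ : (M.submatrix id f₀).det ≠ 0) {S : Finset (ZMod n)} :
    ColsIndepW M S ↔ ∃ f : Fin k → ZMod n, (M.submatrix id f).det ≠ 0 ∧ ↑S ⊆ Set.range f :=
  linearIndepOn_col_iff_exists_det_ne_zero h₀ (s := ↑S)

theorem map_eval_MWpoly (P : Fin k → ZMod n × ZMod n) (y : Fin k × ZMod n → ℝ) :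
    (MWpoly k n P).map (eval y) = filling (fun q => ↑(propSupp (P q))) (Function.curry y) := by
  ext q v
  by_cases hv : v ∈ propSupp (P q) <;> simp [MWpoly, filling, hv]

theorem eval_det_MWpoly_submatrix (P : Fin k → ZMod n × ZMod n) (f : Fin k → ZMod n)
    (y : Fin k × ZMod n → ℝ) :
    eval y ((MWpoly k n P).submatrix id f).det =
      ((filling (fun q => ↑(propSupp (P q))) (Function.curry y)).submatrix id f).det := by
  rw [RingHom.map_det, ← map_eval_MWpoly]
  rfl

theorem det_MW_submatrix_eq_zero_iff {f : Fin k → ZMod n} :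
    ((MW k n P).submatrix id f).det = 0 ↔ ((MWpoly k n P).submatrix id f).det = 0 := by
  have hdet : ((MW k n P).submatrix id f).det =
      algebraMap (WR k n) (WF k n) ((MWpoly k n P).submatrix id f).det := by
    rw [RingHom.map_det]
    rfl
  rw [hdet, FaithfulSMul.algebraMap_eq_zero_iff]

theorem det_MWpoly_submatrix_ne_zero {f : Fin k → ZMod n} (hf : Function.Injective f)
    (hmem : ∀ q, f q ∈ propSupp (P q)) : ((MWpoly k n P).submatrix id f).det ≠ 0 := by
  have hone : (filling (fun q => ↑(propSupp (P q))) fun q => Pi.single (f q) 1).submatrix id f =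
      (1 : Matrix (Fin k) (Fin k) ℝ) := by
    ext q r
    rcases eq_or_ne q r with rfl | hqr
    · simp [filling, hmem]
    · simp [filling, Set.indicator, Matrix.one_apply_ne hqr, hf.eq_iff, hqr.symm]
  intro hzero
  have heval := eval_det_MWpoly_submatrix P f (Function.uncurry fun q => Pi.single (f q) 1)
  rw [hzero, map_zero, Function.curry_uncurry, hone, Matrix.det_one] at heval
  exact zero_ne_one heval

theorem exists_maximalMinorsNonneg_det_eq_zero_iff [NeZero n] [Preorder (ZMod n)]
    (hP : RobustlyNonneg fun q => (propSupp (P q) : Set (ZMod n))) :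
    ∃ A : Matrix (Fin k) (ZMod n) ℝ, MaximalMinorsNonneg A ∧
      ∀ f, (A.submatrix id f).det = 0 ↔ ((MW k n P).submatrix id f).det = 0 := by
  obtain ⟨x, hx⟩ := hP
  have hcurry : Continuous (Function.curry : (Fin k × ZMod n → ℝ) → Fin k → ZMod n → ℝ) := by
    unfold Function.curry
    fun_prop
  have hnonneg := hcurry.tendsto (Function.uncurry x) |>.eventually (Function.curry_uncurry x ▸ hx)
  obtain ⟨y, hgeneric, hy⟩ := ((frequently_forall_eval_eq_zero_iff
    (fun f => ((MWpoly k n P).submatrix id f).det) _).and_eventually hnonneg).exists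
  refine ⟨_, hy, fun f => ?_⟩
  rw [← eval_det_MWpoly_submatrix, hgeneric, det_MW_submatrix_eq_zero_iff]

theorem exists_det_MW_submatrix_ne_zero
    (hcard : ∀ s : Finset (Fin k), s.card ≤ (s.biUnion fun q => propSupp (P q)).card) :
    ∃ f, ((MW k n P).submatrix id f).det ≠ 0 := by
  obtain ⟨f, hf, hmem⟩ := (Finset.all_card_le_biUnion_card_iff_exists_injective _).1 hcard
  exact ⟨f, det_MW_submatrix_eq_zero_iff.not.2 (det_MWpoly_submatrix_ne_zero hf hmem)⟩

theorem Admissible.not_cross (hP : Admissible n (Finset.univ.val.map P)) (p q : Fin k) :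
    ¬ Cross (P p) (P q) :=
  hP.1 _ (Multiset.mem_map_of_mem P (Finset.mem_univ p)) _
    (Multiset.mem_map_of_mem P (Finset.mem_univ q))

theorem multiSupp_map (s : Finset (Fin k)) :
    multiSupp (s.val.map P) = s.biUnion fun q => propSupp (P q) := by
  rw [← Finset.sup_eq_biUnion, multiSupp, Multiset.map_map]
  rfl

theorem Admissible.card_add_three_le_s12 (hP : Admissible n (Finset.univ.val.map P))
    {s : Finset (Fin k)} (hs : s.Nonempty) :
    s.card + 3 ≤ (s.biUnion fun q => propSupp (P q)).card := by
  have hle : s.val.map P ≤ Finset.univ.val.map P :=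
    Multiset.map_le_map (Finset.val_le_iff.2 (Finset.subset_univ s))
  have hne : s.val.map P ≠ 0 := by
    simpa only [ne_eq, Multiset.map_eq_zero, Finset.val_eq_zero] using hs.ne_empty
  simpa only [multiSupp_map, Multiset.card_map, Finset.card_val] using hP.2.1 _ hle hne

theorem Admissible.four_le_card_propSupp (hP : Admissible n (Finset.univ.val.map P)) (q : Fin k) :
    4 ≤ (propSupp (P q)).card := by
  simpa only [Finset.singleton_biUnion, Finset.card_singleton, Nat.reduceAdd] using
    hP.card_add_three_le_s12 (Finset.singleton_nonempty q)

theorem Admissible.card_le_card_biUnion (hP : Admissible n (Finset.univ.val.map P))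
    (s : Finset (Fin k)) : s.card ≤ (s.biUnion fun q => propSupp (P q)).card := by
  rcases s.eq_empty_or_nonempty with rfl | hs
  · exact Nat.zero_le _
  · exact le_of_add_le_left (hP.card_add_three_le_s12 hs)

end WilsonLoopDiagram

theorem statement12_general (k n : ℕ) [NeZero n] (P : Fin k → ZMod n × ZMod n)
    (hcross : ∀ p q, ¬ Cross (P p) (P q)) (hsupp : ∀ q, 4 ≤ (propSupp (P q)).card)
    (hcard : ∀ s : Finset (Fin k), s.card ≤ (s.biUnion fun q => propSupp (P q)).card) :
    ∃ A : Matrix (Fin k) (ZMod n) ℝ, A.rank = k ∧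
      (∀ f : Fin k → ZMod n, StrictMono (fun i => (f i).val) →
        0 ≤ (A.submatrix id f).det) ∧
      (∀ S : Finset (ZMod n), ColsIndepW A S ↔ ColsIndepW (MW k n P) S) := by
  let := valLinearOrder n
  obtain ⟨A, hnonneg, hdet⟩ :=
    exists_maximalMinorsNonneg_det_eq_zero_iff (robustlyNonneg_propSupp hsupp hcross)
  obtain ⟨f₀, hMW₀⟩ := exists_det_MW_submatrix_ne_zero hcard
  have hA₀ : (A.submatrix id f₀).det ≠ 0 := (hdet f₀).not.2 hMW₀
  refine ⟨A, ?_, fun f hf => hnonneg f fun _ _ h => hf.monotone h, fun S => ?_⟩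
  · rw [rank_eq_card_of_det_submatrix_ne_zero hA₀, Fintype.card_fin]
  · simp only [colsIndepW_iff_exists_det_ne_zero hA₀, colsIndepW_iff_exists_det_ne_zero hMW₀,
      ne_eq, hdet]

/-- for every admissible Wilson loop diagram with `k` propagators, the
column matroid of `M_{V(𝒫)}` is a positroid: there is a real `k×n` matrix of rank `k`
with all (column-ordered) `k×k` minors nonnegative having exactly the same linearly
independent column sets as `M_{V(𝒫)}`. -/
theorem statement12 (k n : ℕ) [NeZero n] (P : Fin k → ZMod n × ZMod n)
    (hW : Admissible n (Multiset.map P Finset.univ.val)) :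
    ∃ A : Matrix (Fin k) (ZMod n) ℝ, A.rank = k ∧
      (∀ f : Fin k → ZMod n, StrictMono (fun i => (f i).val) →
        0 ≤ (A.submatrix id f).det) ∧
      (∀ S : Finset (ZMod n), ColsIndepW A S ↔ ColsIndepW (MW k n P) S) :=
  statement12_general k n P hW.not_cross hW.four_le_card_propSupp hW.card_le_card_biUnion
end

section
/- Let W = (𝒫,[n]) be an admissible Wilson loop diagram containing two propagators p = (i,j) and q = (i,k) adjacent on the edge i, meaning: i, j, k are distinct, the cyclic interval from j to k not containing i is traversed in the direction i → j → k, and no propagator (i,m) ∈ 𝒫 has m strictly inside that interval. Suppose moreover k ≠ j+1 and r = (j,k) ∉ 𝒫. Then both Wilson loop diagrams W' = ((𝒫 ∖ {p}) ∪ {r}, [n]) and W'' = ((𝒫 ∖ {q}) ∪ {r}, [n]) are admissible. -/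
/-! View propagators as chords between edges, and let `E` be the set of endpoints of a nonempty set
`S` of distinct noncrossing chords. Distinct noncrossing chords between `e` points of a cyclically
ordered set number at most `2e - 3`. Joining consecutive points of `E` by unit chords creates no
crossing, so if `S` itself contains no unit chord, then
`|S| + |E ∩ (E + 1)| ≤ 2|E| - 3`. As `V_S = E ∪ (E + 1)` has `2|E| - |E ∩ (E + 1)|` elements, this
says `|S| + 3 ≤ |V_S|`. Hence a noncrossing diagram is locally dense as soon as its propagators are
distinct and each is supported on four vertices. These conditions survive adding `(j, k)`, because
a chord crossing the side `jk` of the triangle `ijk` either crosses one of the other two sides or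
is a chord `im` with `m` strictly between `j` and `k`. -/

section NoncrossingChords

variable {α : Type*} [LinearOrder α]

/-- The chords of `S` that are longest among those with the same upper endpoint, a chord of a
linear order being the unordered pair of its endpoints. -/
def longestChords (S : Finset (Sym2 α)) : Finset (Sym2 α) :=
  {e ∈ S | ∀ f ∈ S, f.sup = e.sup → e.inf ≤ f.inf}

theorem sym2_mk_inf_sup (e : Sym2 α) : s(e.inf, e.sup) = e :=
  Sym2.sortEquiv.left_inv e

variable {S : Finset (Sym2 α)} {E : Finset α}

theorem injOn_sup_longestChords : Set.InjOn Sym2.sup (longestChords S : Set (Sym2 α)) := by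
  intro e he f hf hsup
  simp only [longestChords, Finset.coe_filter, Set.mem_ofPred_eq] at he hf
  exact Sym2.inf_eq_inf_and_sup_eq_sup.1
    ⟨le_antisymm (he.2 f hf.1 hsup.symm) (hf.2 e he.1 hsup), hsup⟩

theorem exists_inf_lt_of_mem_sdiff_longestChords {e : Sym2 α} (he : e ∈ S \ longestChords S) :
    ∃ f ∈ S, f.sup = e.sup ∧ f.inf < e.inf := by
  simp only [longestChords, Finset.mem_sdiff, Finset.mem_filter] at he
  grind

theorem injOn_inf_sdiff_longestChords (hlt : ∀ e ∈ S, e.inf < e.sup)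
    (hcross : ∀ e ∈ S, ∀ f ∈ S, e.inf < f.inf → f.inf < e.sup → f.sup ≤ e.sup) :
    Set.InjOn Sym2.inf ((S \ longestChords S : Finset (Sym2 α)) : Set (Sym2 α)) := by
  have sup_le {e f : Sym2 α} (he : e ∈ S \ longestChords S) (hf : f ∈ S)
      (hinf : e.inf = f.inf) : f.sup ≤ e.sup := by
    obtain ⟨g, hg, hsup, hlt_inf⟩ := exists_inf_lt_of_mem_sdiff_longestChords he
    rw [← hsup]
    refine hcross g hg f hf (hinf ▸ hlt_inf) ?_
    rw [hsup, ← hinf]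
    exact hlt e (Finset.mem_sdiff.1 he).1
  intro e he f hf hinf
  exact Sym2.inf_eq_inf_and_sup_eq_sup.1 ⟨hinf, le_antisymm
    (sup_le hf (Finset.mem_sdiff.1 he).1 hinf.symm) (sup_le he (Finset.mem_sdiff.1 hf).1 hinf)⟩

/-- The longest chord for each upper endpoint is determined by that endpoint, which is not the
minimum of `E`. Any other chord lies below a longer one with the same upper endpoint, so its lower
endpoint determines it and is neither the minimum nor the maximum of `E`. -/
theorem card_add_three_le_two_mul_card_of_noncrossing (hS : S.Nonempty) (hE : S ⊆ E.sym2)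
    (hlt : ∀ e ∈ S, e.inf < e.sup)
    (hcross : ∀ e ∈ S, ∀ f ∈ S, e.inf < f.inf → f.inf < e.sup → f.sup ≤ e.sup) :
    S.card + 3 ≤ 2 * E.card := by
  have hmem {e : Sym2 α} (he : e ∈ S) : e.inf ∈ E ∧ e.sup ∈ E := by
    rw [← Finset.mk_mem_sym2_iff, sym2_mk_inf_sup]
    exact hE he
  obtain ⟨e₀, he₀⟩ := hS
  have hne : E.Nonempty := ⟨_, (hmem he₀).1⟩
  have min_le_inf {e : Sym2 α} (he : e ∈ S) : E.min' hne ≤ e.inf := E.min'_le _ (hmem he).1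
  have sup_le_max {e : Sym2 α} (he : e ∈ S) : e.sup ≤ E.max' hne := E.le_max' _ (hmem he).2
  have hmin_ne_max : E.max' hne ≠ E.min' hne :=
    ((min_le_inf he₀).trans_lt ((hlt e₀ he₀).trans_le (sup_le_max he₀))).ne'
  have hlong : (longestChords S).card ≤ (E.erase (E.min' hne)).card := by
    refine Finset.card_le_card_of_injOn Sym2.sup (fun e he => ?_) injOn_sup_longestChords
    have he : e ∈ S := Finset.filter_subset _ _ he
    exact Finset.mem_erase.2 ⟨((min_le_inf he).trans_lt (hlt e he)).ne', (hmem he).2⟩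
  have hrest : (S \ longestChords S).card ≤ ((E.erase (E.min' hne)).erase (E.max' hne)).card := by
    refine Finset.card_le_card_of_injOn Sym2.inf (fun e he => ?_)
      (injOn_inf_sdiff_longestChords hlt hcross)
    obtain ⟨f, hf, -, hfe⟩ := exists_inf_lt_of_mem_sdiff_longestChords he
    have he : e ∈ S := (Finset.mem_sdiff.1 he).1
    exact Finset.mem_erase.2 ⟨((hlt e he).trans_le (sup_le_max he)).ne,
      Finset.mem_erase.2 ⟨((min_le_inf hf).trans_lt hfe).ne', (hmem he).1⟩⟩
  have hsplit : (S \ longestChords S).card + (longestChords S).card = S.card :=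
    Finset.card_sdiff_add_card_eq_card (Finset.filter_subset _ _)
  have hmin := Finset.card_erase_add_one (E.min'_mem hne)
  have hmax := Finset.card_erase_add_one (Finset.mem_erase.2 ⟨hmin_ne_max, E.max'_mem hne⟩)
  omega

end NoncrossingChords

section Crosses

variable {α : Type*} [CircularOrder α]

theorem sbtw_of_sbtw_of_sbtw {a b c d : α} (hbc : sbtw a b c) (hcd : sbtw a c d) : sbtw b c d :=
  (sbtw_trans_right hcd.cyclic_left hbc.cyclic_right).cyclic_right

theorem sbtw_or_sbtw_of_ne {a b x y : α} (hx : sbtw a x b) (hy : sbtw a y b) (hne : x ≠ y) :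
    sbtw a x y ∨ sbtw y x b := by
  refine or_iff_not_imp_left.2 fun hxy => sbtw_of_sbtw_of_sbtw ?_ hx
  refine sbtw_iff_not_btw.2 fun hyx => ?_
  rcases hyx.antisymm (btw_iff_not_sbtw.2 hxy).cyclic_right with rfl | rfl | rfl
  · exact hne rfl
  · exact sbtw_irrefl_left hy
  · exact sbtw_irrefl_left hx

/-- Two chords of a cyclic order cross when their endpoints strictly alternate. In particular
chords with a common endpoint do not cross. -/
def Crosses (e f : Sym2 α) : Prop :=
  ∃ a b c d, e = s(a, b) ∧ f = s(c, d) ∧ sbtw a c b ∧ sbtw b d a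

theorem crosses_mk_left_iff {a b : α} {f : Sym2 α} :
    Crosses s(a, b) f ↔ ∃ c d, f = s(c, d) ∧ sbtw a c b ∧ sbtw b d a := by
  constructor
  · rintro ⟨a', b', c, d, he, rfl, hc, hd⟩
    rcases Sym2.eq_iff.1 he with ⟨rfl, rfl⟩ | ⟨rfl, rfl⟩
    · exact ⟨c, d, rfl, hc, hd⟩
    · exact ⟨d, c, Sym2.eq_swap, hd, hc⟩
  · rintro ⟨c, d, hf, hc, hd⟩
    exact ⟨a, b, c, d, rfl, hf, hc, hd⟩

theorem crosses_mk_iff {a b c d : α} :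
    Crosses s(a, b) s(c, d) ↔ sbtw a c b ∧ sbtw b d a ∨ sbtw a d b ∧ sbtw b c a := by
  rw [crosses_mk_left_iff]
  constructor
  · rintro ⟨x, y, hxy, hx, hy⟩
    rcases Sym2.eq_iff.1 hxy with ⟨rfl, rfl⟩ | ⟨rfl, rfl⟩
    · exact Or.inl ⟨hx, hy⟩
    · exact Or.inr ⟨hx, hy⟩
  · rintro (⟨hc, hd⟩ | ⟨hd, hc⟩)
    · exact ⟨c, d, rfl, hc, hd⟩
    · exact ⟨d, c, Sym2.eq_swap, hd, hc⟩

theorem Crosses.symm {e f : Sym2 α} : Crosses e f → Crosses f e := by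
  rintro ⟨a, b, c, d, rfl, rfl, hc, hd⟩
  exact ⟨c, d, b, a, rfl, Sym2.eq_swap, sbtw_of_sbtw_of_sbtw hc hd.cyclic_right,
    sbtw_of_sbtw_of_sbtw hd hc.cyclic_right⟩

theorem not_crosses_self (e : Sym2 α) : ¬ Crosses e e := by
  rcases e with ⟨a, b⟩
  rw [crosses_mk_iff]
  rintro (⟨h, -⟩ | ⟨h, -⟩)
  · exact sbtw_irrefl_left h
  · exact sbtw_irrefl_right h

theorem Crosses.of_triangle {i j k : α} {e : Sym2 α} (horder : sbtw i j k)
    (h : Crosses s(j, k) e) :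
    Crosses s(i, j) e ∨ Crosses s(i, k) e ∨ ∃ m, e = s(i, m) ∧ sbtw j m k := by
  obtain ⟨a, b, rfl, ha, hb⟩ := crosses_mk_left_iff.1 h
  by_cases hbi : b = i
  · exact Or.inr (Or.inr ⟨a, by rw [hbi, Sym2.eq_swap], ha⟩)
  have hki : sbtw k i j := horder.cyclic_right
  rcases sbtw_or_sbtw_of_ne hb hki hbi with hb | hb
  · exact Or.inr (Or.inl (crosses_mk_iff.2 (Or.inl ⟨horder.trans_left ha, hb⟩)))
  · exact Or.inl (crosses_mk_iff.2 (Or.inr ⟨hb, sbtw_trans_right ha horder.cyclic_left⟩))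

instance : Std.Symm fun e f : Sym2 α => ¬ Crosses e f := ⟨fun _ _ h h' => h h'.symm⟩

/-- A set of chords no two of which cross. -/
def IsNoncrossing (S : Set (Sym2 α)) : Prop :=
  S.Pairwise fun e f => ¬ Crosses e f

theorem IsNoncrossing.union {S T : Set (Sym2 α)} (hS : IsNoncrossing S)
    (hT : ∀ e ∈ T, ∀ f, ¬ Crosses e f) : IsNoncrossing (S ∪ T) := by
  refine Set.pairwise_union_of_symm.2
    ⟨hS, fun e he f _ _ => hT e he f, fun e _ f hf _ h => hT f hf e h.symm⟩

theorem IsNoncrossing.insert_triangle {S : Set (Sym2 α)} {i j k : α} (hS : IsNoncrossing S)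
    (hij : s(i, j) ∈ S) (hik : s(i, k) ∈ S) (horder : sbtw i j k)
    (hadj : ∀ m, s(i, m) ∈ S → ¬ sbtw j m k) : IsNoncrossing (insert s(j, k) S) := by
  refine Set.pairwise_insert_of_symm.2 ⟨hS, fun e he _ h => ?_⟩
  rcases h.of_triangle horder with h | h | ⟨m, rfl, hm⟩
  · exact hS hij he (fun he => not_crosses_self e (he ▸ h)) h
  · exact hS hik he (fun he => not_crosses_self e (he ▸ h)) h
  · exact hadj m he hm

end Crosses

theorem card_add_three_le_two_mul_card_fin {n : ℕ} {S : Finset (Sym2 (Fin n))}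
    {E : Finset (Fin n)} (hS : S.Nonempty) (hE : S ⊆ E.sym2) (hdiag : ∀ e ∈ S, ¬ e.IsDiag)
    (hcross : IsNoncrossing (S : Set (Sym2 (Fin n)))) : S.card + 3 ≤ 2 * E.card := by
  refine card_add_three_le_two_mul_card_of_noncrossing hS hE (fun e he => ?_)
    fun e he f hf hef hfe => ?_
  · refine lt_of_le_of_ne e.inf_le_sup fun h => hdiag e he ?_
    rw [← sym2_mk_inf_sup e, h]
    exact Sym2.diag_isDiag _
  · by_contra! hlt
    refine hcross he hf (fun h => hef.ne (congrArg Sym2.inf h)) ?_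
    exact ⟨e.inf, e.sup, f.inf, f.sup, (sym2_mk_inf_sup e).symm, (sym2_mk_inf_sup f).symm,
      Fin.sbtw_iff.2 (Or.inl ⟨hef, hfe⟩), Fin.sbtw_iff.2 (Or.inr (Or.inr ⟨hef.trans hfe, hlt⟩))⟩

theorem fin_sbtw_iff_val_sub {n : ℕ} {a b c : Fin n} :
    sbtw a b c ↔ 0 < (b - a).val ∧ (b - a).val < (c - a).val := by
  have val_sub (x : Fin n) : a ≤ x ∧ (x - a).val = x.val - a.val ∨
      x < a ∧ (x - a).val = n + x.val - a.val :=
    (le_or_gt a x).imp (fun h => ⟨h, Fin.coe_sub_iff_le.2 h⟩) fun h => ⟨h, Fin.coe_sub_iff_lt.2 h⟩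
  have hb := val_sub b
  have hc := val_sub c
  rw [Fin.sbtw_iff]
  omega

section ZMod

variable {n : ℕ} [NeZero n]

theorem inside_iff_sbtw {a b c : ZMod n} : Inside a b c ↔ sbtw a b c := by
  obtain ⟨m, rfl⟩ := Nat.exists_eq_succ_of_ne_zero (NeZero.ne n)
  exact (fin_sbtw_iff_val_sub (n := m + 1)).symm

theorem card_add_three_le_two_mul_card_zmod {S : Finset (Sym2 (ZMod n))}
    {E : Finset (ZMod n)} (hS : S.Nonempty) (hE : S ⊆ E.sym2) (hdiag : ∀ e ∈ S, ¬ e.IsDiag)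
    (hcross : IsNoncrossing (S : Set (Sym2 (ZMod n)))) : S.card + 3 ≤ 2 * E.card := by
  obtain ⟨m, rfl⟩ := Nat.exists_eq_succ_of_ne_zero (NeZero.ne n)
  exact card_add_three_le_two_mul_card_fin (n := m + 1) hS hE hdiag hcross

theorem cross_iff_crosses {p q : ZMod n × ZMod n} :
    Cross p q ↔ Crosses s(p.1, p.2) s(q.1, q.2) := by
  simp only [Cross, inside_iff_sbtw, crosses_mk_iff]

theorem not_sbtw_add_one (a b : ZMod n) : ¬ sbtw a b (a + 1) := by
  rw [← inside_iff_sbtw]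
  rintro ⟨hpos, hlt⟩
  rw [add_sub_cancel_left, ZMod.val_one_eq_one_mod] at hlt
  have := Nat.mod_le 1 n
  omega

end ZMod

section VertexSupport

/-- The points at which the chords in `S` end. -/
def endpoints {α : Type*} [DecidableEq α] (S : Finset (Sym2 α)) : Finset α :=
  S.biUnion Sym2.toFinset

theorem subset_sym2_endpoints {α : Type*} [DecidableEq α] (S : Finset (Sym2 α)) :
    S ⊆ (endpoints S).sym2 := fun e he =>
  Finset.mem_sym2_iff.2 fun _ ha => Finset.mem_biUnion.2 ⟨e, he, Sym2.mem_toFinset.2 ha⟩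

variable {n : ℕ}

/-- The support `V_S` of a set of propagators, each encoded as the chord joining its two edges. -/
def vertexSupport (S : Finset (Sym2 (ZMod n))) : Finset (ZMod n) :=
  endpoints S ∪ (endpoints S).image (· + 1)

theorem vertexSupport_insert (e : Sym2 (ZMod n)) (S : Finset (Sym2 (ZMod n))) :
    vertexSupport (insert e S) = vertexSupport {e} ∪ vertexSupport S := by
  simp only [vertexSupport, endpoints, Finset.biUnion_insert, Finset.singleton_biUnion,
    Finset.image_union]
  exact Finset.union_union_union_comm _ _ _ _

theorem vertexSupport_singleton_mk (a b : ZMod n) :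
    vertexSupport {s(a, b)} = {a, a + 1, b, b + 1} := by
  ext v
  simp only [vertexSupport, endpoints, Finset.singleton_biUnion, Sym2.toFinset_mk_eq,
    Finset.image_insert, Finset.image_singleton, Finset.mem_union, Finset.mem_insert,
    Finset.mem_singleton]
  tauto

theorem card_vertexSupport_singleton_le (e : Sym2 (ZMod n)) : (vertexSupport {e}).card ≤ 4 := by
  rcases e with ⟨a, b⟩
  rw [vertexSupport_singleton_mk]
  exact Finset.card_le_four

theorem card_vertexSupport_singleton_mk_eq_four_iff {a b : ZMod n} :
    (vertexSupport {s(a, b)}).card = 4 ↔ a ≠ b ∧ a + 1 ≠ b ∧ b + 1 ≠ a := by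
  have card_eq_four_iff_nodup :
      (vertexSupport {s(a, b)}).card = 4 ↔ [a, a + 1, b, b + 1].Nodup := by
    rw [vertexSupport_singleton_mk, ← Multiset.coe_nodup,
      ← Multiset.toFinset_card_eq_card_iff_nodup]
    simp
  have succ_ne_self (h : a ≠ b) (x : ZMod n) : x ≠ x + 1 := by
    have : Nontrivial (ZMod n) := ⟨a, b, h⟩
    simp
  rw [card_eq_four_iff_nodup]
  simp only [List.nodup_cons, List.mem_cons, List.not_mem_nil, or_false, not_or,
    not_false_eq_true, List.nodup_nil, and_true, add_left_inj]
  exact ⟨fun ⟨⟨_, hab, hba⟩, ⟨hab', _⟩, _⟩ => ⟨hab, hab', Ne.symm hba⟩,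
    fun ⟨hab, hab', hba⟩ => ⟨⟨succ_ne_self hab a, hab, hba.symm⟩, ⟨hab', hab⟩, succ_ne_self hab b⟩⟩

theorem two_lt_of_card_vertexSupport_singleton_eq_four [NeZero n] {e : Sym2 (ZMod n)}
    (h : (vertexSupport {e}).card = 4) : 2 < n := by
  have := Finset.card_le_univ (vertexSupport {e})
  rw [ZMod.card] at this
  omega

end VertexSupport

section LocalDensity

variable {n : ℕ}

/-- The chords joining two cyclically consecutive points of `E`. -/
def unitChords (E : Finset (ZMod n)) : Finset (Sym2 (ZMod n)) :=
  (E ∩ E.image (· + 1)).image fun a => s(a - 1, a)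

theorem unitChords_subset_sym2 (E : Finset (ZMod n)) : unitChords E ⊆ E.sym2 := by
  simp only [unitChords, Finset.image_subset_iff, Finset.mem_inter, Finset.mem_image,
    Finset.mk_mem_sym2_iff]
  rintro _ ⟨ha, b, hb, rfl⟩
  rw [add_sub_cancel_right]
  exact ⟨hb, ha⟩

theorem card_unitChords (hn : 2 < n) (E : Finset (ZMod n)) :
    (unitChords E).card = (E ∩ E.image (· + 1)).card := by
  refine Finset.card_image_of_injective _ fun a b hab => ?_
  rcases Sym2.eq_iff.1 hab with ⟨-, h⟩ | ⟨h, h'⟩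
  · exact h
  · have two_eq_zero : ((2 : ℕ) : ZMod n) = 0 := by
      push_cast
      linear_combination h' - h
    exact absurd (Nat.le_of_dvd two_pos ((ZMod.natCast_eq_zero_iff 2 n).1 two_eq_zero)) hn.not_ge

variable [NeZero n]

theorem not_crosses_of_mem_unitChords {E : Finset (ZMod n)} {e f : Sym2 (ZMod n)}
    (he : e ∈ unitChords E) : ¬ Crosses e f := by
  obtain ⟨a, -, rfl⟩ := Finset.mem_image.1 he
  rw [crosses_mk_left_iff]
  rintro ⟨c, -, -, hc, -⟩
  exact not_sbtw_add_one (a - 1) c (by rwa [sub_add_cancel])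

theorem card_add_three_le_card_vertexSupport {S : Finset (Sym2 (ZMod n))} (hS : S.Nonempty)
    (hsupp : ∀ e ∈ S, (vertexSupport {e}).card = 4)
    (hcross : IsNoncrossing (S : Set (Sym2 (ZMod n)))) :
    S.card + 3 ≤ (vertexSupport S).card := by
  set E := endpoints S with hE
  have hn : 2 < n := hS.elim fun e he => two_lt_of_card_vertexSupport_singleton_eq_four (hsupp e he)
  have : Fact (1 < n) := ⟨by omega⟩
  have hdisj : Disjoint S (unitChords E) := by
    refine Finset.disjoint_right.2 fun e he heS => ?_
    obtain ⟨a, -, rfl⟩ := Finset.mem_image.1 he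
    exact (card_vertexSupport_singleton_mk_eq_four_iff.1 (hsupp _ heS)).2.1 (sub_add_cancel a 1)
  have hdiag : ∀ e ∈ S ∪ unitChords E, ¬ e.IsDiag := by
    intro e he
    rcases Finset.mem_union.1 he with he | he
    · rcases e with ⟨a, b⟩
      exact (card_vertexSupport_singleton_mk_eq_four_iff.1 (hsupp _ he)).1
    · obtain ⟨a, -, rfl⟩ := Finset.mem_image.1 he
      simp
  have hbound : (S ∪ unitChords E).card + 3 ≤ 2 * E.card := by
    refine card_add_three_le_two_mul_card_zmod (hS.mono Finset.subset_union_left)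
      (Finset.union_subset (subset_sym2_endpoints S) (unitChords_subset_sym2 E)) hdiag ?_
    rw [Finset.coe_union]
    exact hcross.union fun e he _ => not_crosses_of_mem_unitChords he
  have hunion : (vertexSupport S).card + (E ∩ E.image (· + 1)).card = 2 * E.card := by
    rw [vertexSupport, ← hE, Finset.card_union_add_card_inter,
      Finset.card_image_of_injective _ (add_left_injective 1), two_mul]
  rw [Finset.card_union_of_disjoint hdisj, card_unitChords hn] at hbound
  omega

end LocalDensity

section Diagrams

variable {n : ℕ} {P Ps : Multiset (ZMod n × ZMod n)}

/-- The propagators of a diagram as unordered pairs of edges, with multiplicity. -/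
def chords (P : Multiset (ZMod n × ZMod n)) : Multiset (Sym2 (ZMod n)) :=
  P.map fun p => s(p.1, p.2)

theorem chords_cons (p : ZMod n × ZMod n) (P : Multiset (ZMod n × ZMod n)) :
    chords (p ::ₘ P) = s(p.1, p.2) ::ₘ chords P :=
  Multiset.map_cons _ _ _

theorem mk_mem_chords_iff {a b : ZMod n} : s(a, b) ∈ chords P ↔ (a, b) ∈ P ∨ (b, a) ∈ P := by
  simp only [chords, Multiset.mem_map, Sym2.eq_iff, Prod.exists]
  grind

theorem propSupp_eq_vertexSupport (p : ZMod n × ZMod n) :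
    propSupp p = vertexSupport {s(p.1, p.2)} :=
  (vertexSupport_singleton_mk p.1 p.2).symm

theorem multiSupp_eq_vertexSupport (P : Multiset (ZMod n × ZMod n)) :
    multiSupp P = vertexSupport (chords P).toFinset := by
  induction P using Multiset.induction_on with
  | empty => rfl
  | cons p P ih =>
    rw [multiSupp, Multiset.map_cons, Multiset.sup_cons, ← multiSupp, ih, chords_cons,
      Multiset.toFinset_cons, vertexSupport_insert, propSupp_eq_vertexSupport,
      Finset.sup_eq_union]

theorem isNoncrossing_chords_iff [NeZero n] :
    IsNoncrossing {e | e ∈ chords Ps} ↔ ∀ p ∈ Ps, ∀ q ∈ Ps, ¬ Cross p q := by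
  have : Std.Refl fun e f : Sym2 (ZMod n) => ¬ Crosses e f := ⟨not_crosses_self⟩
  rw [IsNoncrossing, Set.pairwise_iff_of_refl]
  simp only [Set.mem_ofPred_eq, chords, Multiset.mem_map, forall_exists_index, and_imp,
    forall_apply_eq_imp_iff₂, cross_iff_crosses]

theorem card_vertexSupport_eq_four_of_mem_chords
    (hdense : ∀ P ≤ Ps, P ≠ 0 → P.card + 3 ≤ (multiSupp P).card) :
    ∀ e ∈ chords Ps, (vertexSupport {e}).card = 4 := by
  intro e he
  refine le_antisymm (card_vertexSupport_singleton_le e) ?_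
  obtain ⟨p, hp, rfl⟩ := Multiset.mem_map.1 he
  simpa [multiSupp_eq_vertexSupport, chords] using
    hdense {p} (Multiset.singleton_le.2 hp) (Multiset.singleton_ne_zero p)

theorem nodup_chords
    (hdense : ∀ P ≤ Ps, P ≠ 0 → P.card + 3 ≤ (multiSupp P).card) : (chords Ps).Nodup := by
  rw [Multiset.nodup_iff_ne_cons_cons]
  intro e t h
  obtain ⟨p, hp, hpe, hrest⟩ := (Multiset.map_eq_cons _ _ _ _).2 h
  obtain ⟨q, hq, hqe, -⟩ := (Multiset.map_eq_cons _ _ _ _).2 hrest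
  have hle : p ::ₘ {q} ≤ Ps := by
    rw [← Multiset.cons_erase hp, Multiset.cons_le_cons_iff]
    exact Multiset.singleton_le.2 hq
  have hfive := hdense _ hle Multiset.cons_ne_zero
  have hsupp : multiSupp (p ::ₘ {q}) = vertexSupport {e} := by
    simp [multiSupp_eq_vertexSupport, chords, hpe, hqe]
  rw [hsupp, Multiset.card_cons, Multiset.card_singleton] at hfive
  have := card_vertexSupport_singleton_le e
  omega

theorem card_add_three_le_card_multiSupp [NeZero n] (hP : P ≠ 0)
    (hcross : IsNoncrossing {e | e ∈ chords P}) (hnodup : (chords P).Nodup)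
    (hsupp : ∀ e ∈ chords P, (vertexSupport {e}).card = 4) :
    P.card + 3 ≤ (multiSupp P).card := by
  have hcard : (chords P).toFinset.card = P.card := by
    rw [Multiset.toFinset_card_of_nodup hnodup, chords, Multiset.card_map]
  rw [multiSupp_eq_vertexSupport, ← hcard]
  refine card_add_three_le_card_vertexSupport ?_ (by simpa using hsupp) ?_
  · rwa [Multiset.toFinset_nonempty, chords, Ne, Multiset.map_eq_zero]
  · exact hcross.mono fun _ => Multiset.mem_toFinset.1

theorem admissible_iff [NeZero n] :
    Admissible n Ps ↔ IsNoncrossing {e | e ∈ chords Ps} ∧ (chords Ps).Nodup ∧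
      (∀ e ∈ chords Ps, (vertexSupport {e}).card = 4) ∧ Ps.card + 4 ≤ n := by
  rw [Admissible, ← isNoncrossing_chords_iff]
  constructor
  · rintro ⟨hcross, hdense, hn⟩
    exact ⟨hcross, nodup_chords hdense, card_vertexSupport_eq_four_of_mem_chords hdense, hn⟩
  · rintro ⟨hcross, hnodup, hsupp, hn⟩
    refine ⟨hcross, fun P hP hne => ?_, hn⟩
    have hle : chords P ≤ chords Ps := Multiset.map_le_map hP
    have hmem {e : Sym2 (ZMod n)} : e ∈ chords P → e ∈ chords Ps := Multiset.mem_of_le hle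
    exact card_add_three_le_card_multiSupp hne (hcross.mono fun _ => hmem)
      (Multiset.nodup_of_le hle hnodup) fun e he => hsupp e (hmem he)

end Diagrams

theorem statement15_general {n : ℕ} {Ps : Multiset (ZMod n × ZMod n)} (hW : Admissible n Ps)
    {i j k : ZMod n} (hp : (i, j) ∈ Ps) (hq : (i, k) ∈ Ps) (horder : Inside i j k)
    (hadj : ∀ m : ZMod n, (i, m) ∈ Ps ∨ (m, i) ∈ Ps → ¬ Inside j m k) (hk : k ≠ j + 1)
    (hr : (j, k) ∉ Ps ∧ (k, j) ∉ Ps) {t : ZMod n × ZMod n} (ht : t ∈ Ps) :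
    Admissible n ((j, k) ::ₘ Ps.erase t) := by
  have : NeZero n := ⟨by have := hW.2.2; omega⟩
  obtain ⟨hcross, hnodup, hsupp, hn⟩ := admissible_iff.1 hW
  rw [inside_iff_sbtw] at horder
  have hle : chords (Ps.erase t) ≤ chords Ps := Multiset.map_le_map (Multiset.erase_le t Ps)
  have hr_notMem : s(j, k) ∉ chords Ps := by
    rw [mk_mem_chords_iff]
    exact not_or.2 hr
  have hr_supp : (vertexSupport {s(j, k)}).card = 4 := by
    refine card_vertexSupport_singleton_mk_eq_four_iff.2 ⟨?_, hk.symm, ?_⟩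
    · rintro rfl
      exact sbtw_irrefl_right horder
    · rintro rfl
      exact not_sbtw_add_one k i horder.cyclic_right
  have hr_cross : IsNoncrossing (insert s(j, k) {e | e ∈ chords Ps}) :=
    hcross.insert_triangle (mk_mem_chords_iff.2 (Or.inl hp)) (mk_mem_chords_iff.2 (Or.inl hq))
      horder fun m hm hjmk => hadj m (mk_mem_chords_iff.1 hm) (inside_iff_sbtw.2 hjmk)
  rw [admissible_iff, chords_cons]
  refine ⟨hr_cross.mono fun e he => ?_, ?_, fun e he => ?_, ?_⟩
  · exact (Multiset.mem_cons.1 he).imp_right (Multiset.mem_of_le hle)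
  · exact Multiset.nodup_cons.2
      ⟨fun h => hr_notMem (Multiset.mem_of_le hle h), Multiset.nodup_of_le hle hnodup⟩
  · rcases Multiset.mem_cons.1 he with rfl | he
    · exact hr_supp
    · exact hsupp e (Multiset.mem_of_le hle he)
  · rwa [Multiset.card_cons, Multiset.card_erase_add_one ht]

/-- let `(Ps,[n])` be an admissible Wilson loop diagram containing
propagators `p = (i,j)` and `q = (i,k)` adjacent on the edge `i` (with `i,j,k`
distinct, the cyclic interval from `j` to `k` not containing `i` traversed in the
direction `i → j → k`, and no propagator `(i,m)` having `m` strictly inside that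
interval).  If `k ≠ j+1` and `r = (j,k) ∉ Ps`, then both diagrams obtained by
replacing `p` (resp. `q`) with `r` are admissible. -/
theorem statement15 (n : ℕ) (Ps : Multiset (ZMod n × ZMod n))
    (hW : Admissible n Ps) (i j k : ZMod n)
    (hp : (i, j) ∈ Ps) (hq : (i, k) ∈ Ps)
    (hij : i ≠ j) (hik : i ≠ k) (hjk : j ≠ k)
    (horder : Inside i j k)
    (hadj : ∀ m : ZMod n, ((i, m) ∈ Ps ∨ (m, i) ∈ Ps) → ¬ Inside j m k)
    (hk : k ≠ j + 1)
    (hr : (j, k) ∉ Ps ∧ (k, j) ∉ Ps) :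
    Admissible n ((j, k) ::ₘ Ps.erase (i, j)) ∧
    Admissible n ((j, k) ::ₘ Ps.erase (i, k)) :=
  ⟨statement15_general hW hp hq horder hadj hk hr hp,
    statement15_general hW hp hq horder hadj hk hr hq⟩
end
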